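/- Let L > 0, let ρ ∈ 𝒟_L, and let μ be the probability measure with density ρ. Then: (1) sup over all t, s ∈ [0,1] and n ≥ 1 of ∫ (ξₙ(x,t) − ξₙ(x,s))² dμ(x) is finite, with a bound depending on ρ only through L; (2) for every ε > 0 there exists N such that for all n ≥ N and all 0 ≤ t ≤ t+h ≤ 1, |∫ (ξₙ(x,t+h) − ξₙ(x,t))² dμ(x) − ∫ₜ^{t+h} σ̂ₛ²(f) ds| ≤ ε(n^{−1/2} + h); and (3) ∫ₜ^{t+h} σ̂ₛ²(f) ds = h·σ̂ₜ²(f) + o(h) as h → 0, uniformly in t. -/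

import Mathlib

open MeasureTheory Filter Topology Set UniformConvergence

noncomputable section

instance : Fact ((0:ℝ) < 1) := ⟨zero_lt_one⟩

/-- The circle `𝕊 = ℝ/ℤ`. -/
abbrev Circle1 : Type := AddCircle (1 : ℝ)

/-- A `C²` expanding circle map with expansion `≥ lam` and `‖T''‖_∞ ≤ Astar`,
encoded by a lift `F : ℝ → ℝ` satisfying `F (x+1) = F x + deg`. -/
structure CM (lam Astar : ℝ) where
  F : ℝ → ℝ
  deg : ℤ
  lift_add_one : ∀ x : ℝ, F (x + 1) = F x + deg
  contDiff : ContDiff ℝ 2 F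
  expanding : ∀ x : ℝ, lam ≤ deriv F x
  second_bound : ∀ x : ℝ, |deriv (deriv F) x| ≤ Astar

namespace CM

variable {lam Astar : ℝ}

/-- The induced map on the circle. -/
def toMap (T : CM lam Astar) : Circle1 → Circle1 :=
  fun x => (↑(T.F ((AddCircle.equivIco 1 0 x : ℝ))) : Circle1)

/-- The derivative of `T`, as a function on the circle. -/
def dmap (T : CM lam Astar) : Circle1 → ℝ :=
  fun x => deriv T.F ((AddCircle.equivIco 1 0 x : ℝ))

end CM

/-- The `C¹` distance on the space of maps. -/
def dC1 {lam Astar : ℝ} (T₁ T₂ : CM lam Astar) : ℝ :=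
  (⨆ x : Circle1, dist (T₁.toMap x) (T₂.toMap x)) + (⨆ x : Circle1, |T₁.dmap x - T₂.dmap x|)

/-- The transfer operator `ℒ_T h (x) = ∑_{T y = x} h y / T' y`. -/
def transfer {lam Astar : ℝ} (T : CM lam Astar) (h : Circle1 → ℝ) : Circle1 → ℝ :=
  fun x => ∑' y : {y : Circle1 // T.toMap y = x}, h y / T.dmap y

/-- Iterated transfer operators `ℒ_k ⋯ ℒ_1` of the sequence `T_1, T_2, …` (`Ts i = T_i`). -/
def transferIter {lam Astar : ℝ} (Ts : ℕ → CM lam Astar) : ℕ → (Circle1 → ℝ) → (Circle1 → ℝ)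
  | 0, h => h
  | (k+1), h => transfer (Ts (k+1)) (transferIter Ts k h)

/-- Composition `T_k ∘ ⋯ ∘ T_1` as circle maps. -/
def mapIter {lam Astar : ℝ} (Ts : ℕ → CM lam Astar) : ℕ → Circle1 → Circle1
  | 0 => id
  | (k+1) => (Ts (k+1)).toMap ∘ mapIter Ts k

/-- Composition of the lifts `F_k ∘ ⋯ ∘ F_1`. -/
def liftIter {lam Astar : ℝ} (Ts : ℕ → CM lam Astar) : ℕ → ℝ → ℝ
  | 0 => id
  | (k+1) => (Ts (k+1)).F ∘ liftIter Ts k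

/-- A real representative of `z`. -/
def zrep (z : Circle1) : ℝ := (AddCircle.equivIco 1 0 z : ℝ)

/-- The coordinate on the cut circle `J_z = 𝕊 ∖ {z}`. -/
def arcCoord (z x : Circle1) : ℝ := ((AddCircle.equivIoc 1 (zrep z) x : ℝ))

/-- `|x − y|_z`: the length of the subarc of `J_z` connecting `x` and `y`. -/
def arcDist (z x y : Circle1) : ℝ := |arcCoord z x - arcCoord z y|

/-- `g` is Lipschitz on `J_z = 𝕊 ∖ {z}` with constant `L`. -/
def LipOnArc (z : Circle1) (L : ℝ) (g : Circle1 → ℝ) : Prop :=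
  ∀ x y : Circle1, x ≠ z → y ≠ z → |g x - g y| ≤ L * arcDist z x y

/-- A probability density w.r.t. the Haar–Lebesgue measure `𝔪` on the circle. -/
def IsProbDensity (ψ : Circle1 → ℝ) : Prop :=
  Integrable ψ volume ∧ (∫ x : Circle1, ψ x) = 1 ∧ ∀ x, 0 ≤ ψ x

/-- The class `𝒟_L`: positive probability densities whose logarithm is Lipschitz
with constant `L` on `J_z` for some `z`. -/
def memD (L : ℝ) (ψ : Circle1 → ℝ) : Prop :=
  IsProbDensity ψ ∧ (∀ x, 0 < ψ x) ∧ ∃ z : Circle1, LipOnArc z L (fun x => Real.log (ψ x))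

/-- The `L¹(𝔪)` norm. -/
def l1norm (h : Circle1 → ℝ) : ℝ := ∫ x : Circle1, |h x|

/-- The supremum norm. -/
def supNorm (h : Circle1 → ℝ) : ℝ := ⨆ x : Circle1, |h x|

/-- The Lipschitz constant of `h` (w.r.t. the metric of the circle). -/
def lipConst (h : Circle1 → ℝ) : ℝ :=
  sInf {L : ℝ | 0 ≤ L ∧ ∀ x y : Circle1, |h x - h y| ≤ L * dist x y}

/-- The Lipschitz norm `‖h‖_Lip = Lip(h) + ‖h‖_∞`. -/
def lipNorm (h : Circle1 → ℝ) : ℝ := lipConst h + supNorm h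

/-- `ρ` is the density of the SRB measure of `T`: the density of a `T`-invariant
probability measure equivalent to `𝔪`. -/
def IsSRBDensity {lam Astar : ℝ} (T : CM lam Astar) (ρ : Circle1 → ℝ) : Prop :=
  IsProbDensity ρ ∧ (∀ᵐ x : Circle1, 0 < ρ x) ∧
    Measure.map T.toMap (volume.withDensity (fun x => ENNReal.ofReal (ρ x))) =
      volume.withDensity (fun x => ENNReal.ofReal (ρ x))

section QDS

variable {lam Astar : ℝ}

/-- `x_{n,k} = T_{n,k} ∘ ⋯ ∘ T_{n,1}` for a triangular array. -/
def arrIter (Tarr : ℕ → ℕ → CM lam Astar) (n : ℕ) : ℕ → Circle1 → Circle1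
  | 0 => id
  | (k+1) => (Tarr n (k+1)).toMap ∘ arrIter Tarr n k

/-- `ℒ_{n,k} ⋯ ℒ_{n,1}` for a triangular array. -/
def arrTransfer (Tarr : ℕ → ℕ → CM lam Astar) (n : ℕ) : ℕ → (Circle1 → ℝ) → (Circle1 → ℝ)
  | 0, h => h
  | (k+1), h => transfer (Tarr n (k+1)) (arrTransfer Tarr n k h)

/-- `f_{n,k} = f ∘ T_{n,k} ∘ ⋯ ∘ T_{n,1}` evaluated at `x`. -/
def fnk (Tarr : ℕ → ℕ → CM lam Astar) (f : Circle1 → ℝ) (n k : ℕ) (x : Circle1) : ℝ :=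
  f (arrIter Tarr n k x)

/-- `ζₙ(x,t) = n⁻¹ (∑_{k<⌊nt⌋} f_{n,k}(x) + {nt}·f_{n,⌊nt⌋}(x))`. -/
def zetaP (Tarr : ℕ → ℕ → CM lam Astar) (f : Circle1 → ℝ) (n : ℕ) (x : Circle1) (t : ℝ) : ℝ :=
  (n : ℝ)⁻¹ * ((∑ k ∈ Finset.range ⌊(n : ℝ) * t⌋₊, fnk Tarr f n k x) +
    Int.fract ((n : ℝ) * t) * fnk Tarr f n ⌊(n : ℝ) * t⌋₊ x)

/-- `ξₙ(x,t) = √n ζₙ(x,t) − √n μ(ζₙ(·,t))` for a measure `μ`. -/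
def xiP (Tarr : ℕ → ℕ → CM lam Astar) (f : Circle1 → ℝ) (μ : Measure Circle1) (n : ℕ)
    (x : Circle1) (t : ℝ) : ℝ :=
  Real.sqrt n * zetaP Tarr f n x t - Real.sqrt n * ∫ y, zetaP Tarr f n y t ∂μ

/-- The Hölder continuity (exponent `η`) of the curve `γ` on `[0,1]`, w.r.t. `d_{C¹}`. -/
def HolderCurve (η : ℝ) (γ : ℝ → CM lam Astar) : Prop :=
  ∃ H : ℝ, ∀ s ∈ Icc (0:ℝ) 1, ∀ t ∈ Icc (0:ℝ) 1, dC1 (γ s) (γ t) ≤ H * |s - t| ^ η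

/-- The convergence-rate condition `sup_n n^η sup_t d_{C¹}(T_{n,⌊nt⌋}, γ_t) < ∞`. -/
def ArrayApprox (η : ℝ) (γ : ℝ → CM lam Astar) (Tarr : ℕ → ℕ → CM lam Astar) : Prop :=
  ∃ M : ℝ, ∀ n : ℕ, 1 ≤ n → ∀ t ∈ Icc (0:ℝ) 1,
    (n : ℝ) ^ η * dC1 (Tarr n ⌊(n : ℝ) * t⌋₊) (γ t) ≤ M

end QDS

/-- The path space: functions `[0,1] → ℝ` with the topology of uniform convergence;
continuous paths (with the supremum metric) embed isometrically. -/
abbrev PathSpace : Type := (Icc (0:ℝ) 1) →ᵤ ℝ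

instance : MeasurableSpace PathSpace := borel PathSpace

/-- A function `[0,1] → ℝ` (given as a function on `ℝ`) as a point of the path space. -/
def pathOf (g : ℝ → ℝ) : PathSpace := UniformFun.ofFun (fun t => g t)

/-- Evaluation of a path at time `t` (clamped to `[0,1]`). -/
def evalPath (t : ℝ) (ω : PathSpace) : ℝ := UniformFun.toFun ω (projIcc 0 1 zero_le_one t)


section Extra

variable {lam Astar : ℝ}

/-- `μ(ζₙ(·,t))` for the measure with density `ρ` w.r.t. `𝔪`. -/
def zetaMean (Tarr : ℕ → ℕ → CM lam Astar) (f : Circle1 → ℝ) (ρ : Circle1 → ℝ)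
    (n : ℕ) (t : ℝ) : ℝ :=
  ∫ y : Circle1, zetaP Tarr f n y t * ρ y

/-- `𝔪(ζₙ(·,t))`, the mean w.r.t. the Lebesgue measure. -/
def zetaMeanM (Tarr : ℕ → ℕ → CM lam Astar) (f : Circle1 → ℝ) (n : ℕ) (t : ℝ) : ℝ :=
  ∫ y : Circle1, zetaP Tarr f n y t

/-- `ξₙ(x,t) = √n ζₙ(x,t) − √n μ(ζₙ(·,t))`, where `μ` has density `ρ`. -/
def xiD (Tarr : ℕ → ℕ → CM lam Astar) (f : Circle1 → ℝ) (ρ : Circle1 → ℝ)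
    (n : ℕ) (x : Circle1) (t : ℝ) : ℝ :=
  Real.sqrt n * zetaP Tarr f n x t - Real.sqrt n * zetaMean Tarr f ρ n t

end Extra

/-- The σ-algebra `𝔉_t` on the path space, generated by the evaluations at times `s ∈ [0,t]`. -/
def pathFiltration (t : ℝ) : MeasurableSpace PathSpace :=
  ⨆ (s : ℝ) (_ : 0 ≤ s ∧ s ≤ t), MeasurableSpace.comap (evalPath s) (borel ℝ)

/-- The process `M_t(ω) = A(ω(t)) − A(ω(0)) − ½∫₀ᵗ σ̂ₛ²·A''(ω(s)) ds`. -/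
def MGproc (σ2 : ℝ → ℝ) (A : ℝ → ℝ) (t : ℝ) (ω : PathSpace) : ℝ :=
  A (evalPath t ω) - A (evalPath 0 ω) -
    (1/2) * ∫ s in (0:ℝ)..t, σ2 s * deriv (deriv A) (evalPath s ω)

/-- `P` solves the martingale problem on `C⁰([0,1],ℝ)` for the generator `½σ̂ₜ² d²/dx²`,
started at `0`:  `P` is a probability measure, concentrated on continuous paths starting at `0`,
and for every `A ∈ C_c^∞(ℝ)` the process `MGproc σ2 A` is a `P`-martingale w.r.t. the
natural filtration `𝔉_t`.  -/
def SolvesMartingaleProblem (σ2 : ℝ → ℝ) (P : Measure PathSpace) : Prop :=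
  IsProbabilityMeasure P ∧
  P {ω : PathSpace | evalPath 0 ω = 0} = 1 ∧
  P {ω : PathSpace | Continuous (UniformFun.toFun ω)} = 1 ∧
  ∀ A : ℝ → ℝ, ContDiff ℝ (⊤ : ℕ∞) A → HasCompactSupport A →
    (∀ t ∈ Icc (0:ℝ) 1, Integrable (MGproc σ2 A t) P) ∧
    (∀ t ∈ Icc (0:ℝ) 1, @Measurable PathSpace ℝ (pathFiltration t) _ (MGproc σ2 A t)) ∧
    (∀ s ∈ Icc (0:ℝ) 1, ∀ t ∈ Icc (0:ℝ) 1, s ≤ t →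
      P[MGproc σ2 A t | pathFiltration s] =ᵐ[P] MGproc σ2 A s)

end

/-! For large `L`, the transfer operators of the maps in `𝓜` send the cone of densities with
log-Lipschitz constant `L` into one with a strictly smaller constant. Hence, after each step, the
images of two densities of equal mass still lie in the original cone when a common constant is
subtracted from them, and this constant carries a fixed proportion of the mass. So any sequence of
maps forgets its initial density exponentially fast, uniformly in the sequence. Consequently the
covariances of `f_{n,i}` and `f_{n,i+k}` decay exponentially in `k`, and the variance of a sum of
the `f_{n,k}` over a block is, up to `O(1)`, the sum over `i` of the local Green–Kubo sums
`c(i,i) + 2 ∑_{k ≥ 1} c(i,i+k)` of the covariances `c`.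

Only boundedly many maps before and after time `i` matter for such a local sum. Away from the ends
of `{0, …, n}` they are all close to `γ_{i/n}`, whence the local sum is close to `σ̂²_{i/n}(f)`, and
the sum over `i` is a Riemann sum for `∫ σ̂²`. The same comparison, applied to constant sequences,
shows that `t ↦ σ̂²ₜ(f)` is continuous, which is all that (3) requires.
-/

section GreenKubo

/-- The Green–Kubo sum `d 0 + 2 ∑_{k ≥ 1} d k` of the autocovariances `d k` of a process. It is the
asymptotic variance of the process when the latter is stationary. -/
noncomputable def greenKubo (d : ℕ → ℝ) : ℝ := d 0 + 2 * ∑' k, d (k + 1)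

variable {d e : ℕ → ℝ} {C θ : ℝ}

lemma summable_of_abs_le_geometric (hθ₀ : 0 ≤ θ) (hθ₁ : θ < 1) (hd : ∀ k, |d k| ≤ C * θ ^ k) :
    Summable d :=
  .of_norm_bounded ((summable_geometric_of_lt_one hθ₀ hθ₁).mul_left C) hd

lemma abs_sum_range_le_of_abs_le_geometric (hθ₀ : 0 ≤ θ) (hθ₁ : θ < 1) (hC : 0 ≤ C) {n : ℕ}
    (hd : ∀ k < n, |d k| ≤ C * θ ^ k) : |∑ k ∈ Finset.range n, d k| ≤ C / (1 - θ) := by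
  calc |∑ k ∈ Finset.range n, d k| ≤ ∑ k ∈ Finset.range n, C * θ ^ k :=
        (Finset.abs_sum_le_sum_abs _ _).trans
          (Finset.sum_le_sum fun k hk => hd k (Finset.mem_range.1 hk))
    _ ≤ ∑' k, C * θ ^ k :=
        ((summable_geometric_of_lt_one hθ₀ hθ₁).mul_left C).sum_le_tsum _ fun k _ => by positivity
    _ = C / (1 - θ) := by rw [tsum_mul_left, tsum_geometric_of_lt_one hθ₀ hθ₁, div_eq_mul_inv]

lemma abs_greenKubo_sub_partialSum_le (hθ₀ : 0 ≤ θ) (hθ₁ : θ < 1)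
    (hd : ∀ k, |d k| ≤ C * θ ^ k) (n : ℕ) :
    |greenKubo d - (d 0 + 2 * ∑ k ∈ Finset.range n, d (k + 1))| ≤ 2 * (C / (1 - θ)) * θ ^ n := by
  have hd' (k : ℕ) : |d (k + 1)| ≤ C * θ ^ k := by
    have hC : 0 ≤ C := by simpa using (abs_nonneg _).trans (hd 0)
    exact (hd _).trans (mul_le_mul_of_nonneg_left
      (pow_le_pow_of_le_one hθ₀ hθ₁.le k.le_succ) hC)
  have htail := norm_sub_le_of_geometric_bound_of_hasSum hθ₁ hd'
    (summable_of_abs_le_geometric hθ₀ hθ₁ hd').hasSum n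
  rw [Real.norm_eq_abs, abs_sub_comm] at htail
  calc |greenKubo d - (d 0 + 2 * ∑ k ∈ Finset.range n, d (k + 1))|
      = 2 * |∑' k, d (k + 1) - ∑ k ∈ Finset.range n, d (k + 1)| := by
        rw [greenKubo, add_sub_add_left_eq_sub, ← mul_sub, abs_mul, abs_two]
    _ ≤ 2 * (C * θ ^ n / (1 - θ)) := by gcongr
    _ = 2 * (C / (1 - θ)) * θ ^ n := by ring

lemma abs_greenKubo_le (hθ₀ : 0 ≤ θ) (hθ₁ : θ < 1) (hd : ∀ k, |d k| ≤ C * θ ^ k) :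
    |greenKubo d| ≤ 3 * (C / (1 - θ)) := by
  have htail := abs_greenKubo_sub_partialSum_le hθ₀ hθ₁ hd 0
  have hC : 0 ≤ C := by simpa using (abs_nonneg _).trans (hd 0)
  have hhead : |d 0| ≤ C / (1 - θ) := by
    simpa using abs_sum_range_le_of_abs_le_geometric hθ₀ hθ₁ hC (n := 1) fun k _ => hd k
  simp only [Finset.range_zero, Finset.sum_empty, mul_zero, add_zero, pow_zero, mul_one] at htail
  linarith [abs_le.1 htail, abs_sub_abs_le_abs_sub (greenKubo d) (d 0)]

lemma greenKubo_sub (hθ₀ : 0 ≤ θ) (hθ₁ : θ < 1) (hd : ∀ k, |d k| ≤ C * θ ^ k)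
    (he : ∀ k, |e k| ≤ C * θ ^ k) : greenKubo (d - e) = greenKubo d - greenKubo e := by
  have hd' := (summable_nat_add_iff 1).2 (summable_of_abs_le_geometric hθ₀ hθ₁ hd)
  have he' := (summable_nat_add_iff 1).2 (summable_of_abs_le_geometric hθ₀ hθ₁ he)
  simp only [greenKubo, Pi.sub_apply, hd'.tsum_sub he']
  ring

lemma exists_abs_greenKubo_sub_le (C : ℝ) (hθ₀ : 0 ≤ θ) (hθ₁ : θ < 1) {ε : ℝ} (hε : 0 < ε) :
    ∃ K : ℕ, ∃ τ > 0, ∀ d e : ℕ → ℝ, (∀ k, |d k| ≤ C * θ ^ k) → (∀ k, |e k| ≤ C * θ ^ k) →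
      (∀ k ≤ K, |d k - e k| ≤ τ) → |greenKubo d - greenKubo e| ≤ ε := by
  obtain ⟨K, hK⟩ : ∃ K : ℕ, 2 * (2 * C / (1 - θ)) * θ ^ K < ε / 2 := by
    have hlim : Tendsto (fun K : ℕ => 2 * (2 * C / (1 - θ)) * θ ^ K) atTop (𝓝 0) := by
      simpa using (tendsto_pow_atTop_nhds_zero_of_lt_one hθ₀ hθ₁).const_mul (2 * (2 * C / (1 - θ)))
    exact (hlim.eventually_lt_const (half_pos hε)).exists
  refine ⟨K, ε / (2 * (1 + 2 * K)), by positivity, fun d e hd he hde => ?_⟩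
  set τ := ε / (2 * (1 + 2 * K)) with hτ
  have hdecay (k : ℕ) : |(d - e) k| ≤ 2 * C * θ ^ k := by
    rw [Pi.sub_apply]
    linarith [abs_sub (d k) (e k), hd k, he k]
  have htail := abs_greenKubo_sub_partialSum_le hθ₀ hθ₁ hdecay K
  have hpartial : |∑ k ∈ Finset.range K, (d - e) (k + 1)| ≤ K * τ := by
    refine (Finset.abs_sum_le_sum_abs _ _).trans ?_
    simpa using Finset.sum_le_card_nsmul (Finset.range K) _ τ fun k hk =>
      hde (k + 1) (Finset.mem_range.1 hk)
  have hτε : τ + 2 * (K * τ) = ε / 2 := by rw [hτ]; field_simp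
  rw [← greenKubo_sub hθ₀ hθ₁ hd he, abs_le]
  have hzero := abs_le.1 (hde 0 K.zero_le)
  rw [abs_le] at htail hpartial
  rw [Pi.sub_apply] at htail
  constructor <;> linarith [htail.1, htail.2, hpartial.1, hpartial.2, hzero.1, hzero.2]

end GreenKubo

section Variance

open ProbabilityTheory

lemma sum_range_sum_range_of_symm {c : ℕ → ℕ → ℝ} (hc : ∀ i j, c i j = c j i) (m : ℕ) :
    ∑ i ∈ Finset.range m, ∑ j ∈ Finset.range m, c i j =
      ∑ i ∈ Finset.range m, (c i i + 2 * ∑ k ∈ Finset.range (m - 1 - i), c i (i + (k + 1))) := by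
  induction m with
  | zero => simp
  | succ m ih =>
    have hrow : ∀ i ∈ Finset.range m,
        c i i + 2 * ∑ k ∈ Finset.range (m + 1 - 1 - i), c i (i + (k + 1)) =
          (c i i + 2 * ∑ k ∈ Finset.range (m - 1 - i), c i (i + (k + 1))) + 2 * c i m := by
      intro i hi
      have him : i < m := Finset.mem_range.1 hi
      rw [show m + 1 - 1 - i = (m - 1 - i) + 1 by omega, Finset.sum_range_succ,
        show i + (m - 1 - i + 1) = m by omega]
      ring
    simp only [Finset.sum_range_succ _ m, Finset.sum_add_distrib, Finset.sum_congr rfl hrow, ih,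
      ← Finset.mul_sum, hc m]
    simp only [Nat.add_sub_cancel, Nat.sub_self, Finset.range_zero, Finset.sum_empty]
    ring

variable {Ω : Type*} [MeasurableSpace Ω] {μ : Measure Ω} [IsFiniteMeasure μ] {X : ℕ → Ω → ℝ}
  {C θ : ℝ}

lemma abs_variance_sum_sub_sum_greenKubo_le (hX : ∀ i, MemLp (X i) 2 μ) (hθ₀ : 0 ≤ θ)
    (hθ₁ : θ < 1) (hcov : ∀ i k, |cov[X i, X (i + k); μ]| ≤ C * θ ^ k) (m : ℕ) :
    |Var[∑ i ∈ Finset.range m, X i; μ] -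
        ∑ i ∈ Finset.range m, greenKubo (fun k => cov[X i, X (i + k); μ])| ≤
      2 * (C / (1 - θ)) / (1 - θ) := by
  rw [variance_sum' fun i _ => hX i,
    sum_range_sum_range_of_symm (fun i j => covariance_comm (X i) (X j)), abs_sub_comm,
    ← Finset.sum_sub_distrib, ← Finset.sum_range_reflect]
  have hC : 0 ≤ C := by simpa using (abs_nonneg _).trans (hcov 0 0)
  refine abs_sum_range_le_of_abs_le_geometric hθ₀ hθ₁
    (by have := sub_pos.2 hθ₁; positivity) fun i hi => ?_
  have hreflect : m - 1 - (m - 1 - i) = i := by omega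
  rw [hreflect]
  exact abs_greenKubo_sub_partialSum_le hθ₀ hθ₁ (hcov (m - 1 - i)) i

lemma abs_covariance_sum_zero_le (hX : ∀ i, MemLp (X i) 2 μ) (hθ₀ : 0 ≤ θ) (hθ₁ : θ < 1)
    (hcov : ∀ i k, |cov[X i, X (i + k); μ]| ≤ C * θ ^ k) (m : ℕ) :
    |cov[∑ i ∈ Finset.range m, X i, X 0; μ]| ≤ C / (1 - θ) := by
  have hC : 0 ≤ C := by simpa using (abs_nonneg _).trans (hcov 0 0)
  rw [covariance_sum_left' (fun i _ => hX i) (hX 0)]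
  refine abs_sum_range_le_of_abs_le_geometric hθ₀ hθ₁ hC fun i _ => ?_
  simpa [covariance_comm] using hcov 0 i

lemma abs_covariance_sum_last_le (hX : ∀ i, MemLp (X i) 2 μ) (hθ₀ : 0 ≤ θ) (hθ₁ : θ < 1)
    (hcov : ∀ i k, |cov[X i, X (i + k); μ]| ≤ C * θ ^ k) (m : ℕ) :
    |cov[∑ i ∈ Finset.range m, X i, X m; μ]| ≤ C / (1 - θ) := by
  have hC : 0 ≤ C := by simpa using (abs_nonneg _).trans (hcov 0 0)
  rw [covariance_sum_left' (fun i _ => hX i) (hX m), ← Finset.sum_range_reflect]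
  refine abs_sum_range_le_of_abs_le_geometric hθ₀ hθ₁ hC fun i hi => ?_
  have hcov_m := hcov (m - 1 - i) (i + 1)
  rw [show m - 1 - i + (i + 1) = m by omega] at hcov_m
  exact hcov_m.trans (mul_le_mul_of_nonneg_left (pow_le_pow_of_le_one hθ₀ hθ₁.le i.le_succ) hC)

lemma abs_variance_sum_add_sub_sum_greenKubo_le (hX : ∀ i, MemLp (X i) 2 μ) (hθ₀ : 0 ≤ θ)
    (hθ₁ : θ < 1) (hcov : ∀ i k, |cov[X i, X (i + k); μ]| ≤ C * θ ^ k) {α β : ℝ}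
    (hα : |α| ≤ 1) (hβ : |β| ≤ 1) (m : ℕ) :
    |Var[∑ i ∈ Finset.range m, X i + (β • X m - α • X 0); μ] -
        ∑ i ∈ Finset.range m, greenKubo (fun k => cov[X i, X (i + k); μ])| ≤
      2 * (C / (1 - θ)) / (1 - θ) + 4 * (C / (1 - θ)) + 4 * C := by
  have hS : MemLp (∑ i ∈ Finset.range m, X i) 2 μ := memLp_finsetSum' _ fun i _ => hX i
  have hbα : MemLp (α • X 0) 2 μ := (hX 0).const_smul α
  have hbβ : MemLp (β • X m) 2 μ := (hX m).const_smul β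
  have hself (i : ℕ) : |Var[X i; μ]| ≤ C := by
    simpa [covariance_self (hX i).aemeasurable] using hcov i 0
  have hC : 0 ≤ C := (abs_nonneg _).trans (hself 0)
  have hends : |cov[X m, X 0; μ]| ≤ C := by
    rw [covariance_comm]
    simpa using (hcov 0 m).trans (mul_le_of_le_one_right hC (pow_le_one₀ hθ₀ hθ₁.le))
  have hscale {a x c : ℝ} (ha : |a| ≤ 1) (hx : |x| ≤ c) : |a * x| ≤ c := by
    rw [abs_mul]; exact (mul_le_of_le_one_left (abs_nonneg x) ha).trans hx
  have hcross := hscale hβ (hscale hα hends)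
  have hvar_last := hscale hβ (hscale hβ (hself m))
  have hvar_first := hscale hα (hscale hα (hself 0))
  have hsum := abs_variance_sum_sub_sum_greenKubo_le hX hθ₀ hθ₁ hcov m
  have hcov_last := hscale hβ (abs_covariance_sum_last_le hX hθ₀ hθ₁ hcov m)
  have hcov_first := hscale hα (abs_covariance_sum_zero_le hX hθ₀ hθ₁ hcov m)
  rw [variance_add hS (hbβ.sub hbα), covariance_sub_right hS hbβ hbα,
    variance_sub hbβ hbα, covariance_smul_right, covariance_smul_right, covariance_smul_left,
    covariance_smul_right, variance_smul, variance_smul, sq, sq, mul_assoc β, mul_assoc α]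
  rw [abs_le] at hsum hcross hvar_last hvar_first hcov_last hcov_first ⊢
  constructor <;> linarith

end Variance

section Circle

lemma coe_add_intCast (x : ℝ) (n : ℤ) : ((x + n : ℝ) : Circle1) = (x : Circle1) := by
  simp

lemma coe_add_natCast (x : ℝ) (n : ℕ) : ((x + n : ℝ) : Circle1) = (x : Circle1) := by
  exact_mod_cast coe_add_intCast x n

lemma continuous_of_comp_coe {β : Type*} [TopologicalSpace β] {g : Circle1 → β}
    (hg : Continuous fun x : ℝ => g x) : Continuous g :=
  QuotientAddGroup.isOpenQuotientMap_mk.isQuotientMap.continuous_iff.2 hg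

lemma dist_coe_coe_le (x y : ℝ) : dist (x : Circle1) (y : Circle1) ≤ |x - y| := by
  rw [dist_eq_norm, ← AddCircle.coe_sub]
  exact QuotientAddGroup.norm_mk_le_norm

instance : IsProbabilityMeasure (volume : Measure Circle1) := ⟨by simp⟩

lemma exists_mem_Ico_coe_eq (z : ℝ) (c : Circle1) : ∃ x ∈ Ico z (z + 1), (x : Circle1) = c :=
  ⟨AddCircle.equivIco 1 z c, (AddCircle.equivIco 1 z c).2, AddCircle.coe_equivIco⟩

lemma ae_exists_mem_Ioo_coe_eq (z : ℝ) :
    ∀ᵐ c : Circle1, ∃ x ∈ Ioo z (z + 1), (x : Circle1) = c := by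
  have hz : volume ({(z : Circle1)} : Set Circle1) = 0 := by
    simpa using AddCircle.volume_closedBall (1 : ℝ) (x := (z : Circle1)) 0
  filter_upwards [compl_mem_ae_iff.2 hz] with c hc
  obtain ⟨x, hx, rfl⟩ := exists_mem_Ico_coe_eq z c
  exact ⟨x, ⟨hx.1.lt_of_ne fun h => hc (by rw [h, mem_singleton_iff]), hx.2⟩, rfl⟩

lemma integrable_iff_integrableOn_coe (t : ℝ) {ψ : Circle1 → ℝ} :
    Integrable ψ ↔ IntegrableOn (fun x : ℝ => ψ x) (Ioc t (t + 1)) := by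
  refine ⟨fun h => (AddCircle.measurePreserving_mk 1 t).integrable_comp_of_integrable h,
    fun h => ?_⟩
  have hsection : MeasurePreserving (fun c : Circle1 => (AddCircle.equivIoc 1 t c : ℝ)) volume
      (volume.restrict (Ioc t (t + 1))) :=
    (measurePreserving_subtype_coe measurableSet_Ioc).comp (AddCircle.measurePreserving_equivIoc 1)
  simpa [Function.comp_def, AddCircle.coe_equivIoc] using hsection.integrable_comp_of_integrable h

lemma intervalIntegrable_coe {ψ : Circle1 → ℝ} (hψ : Integrable ψ) (a b : ℝ) :
    IntervalIntegrable (fun x : ℝ => ψ x) volume a b := by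
  have hper : Function.Periodic (fun x : ℝ => ψ x) 1 := fun x => by
    simp only [AddCircle.coe_add_period]
  refine hper.intervalIntegrable₀ one_ne_zero ?_ a b
  rw [intervalIntegrable_iff_integrableOn_Ioc_of_le zero_le_one]
  simpa using (integrable_iff_integrableOn_coe 0).1 hψ

end Circle

namespace CM

variable {lam Astar : ℝ} (T : CM lam Astar)

lemma F_add_intCast (x : ℝ) (n : ℤ) : T.F (x + n) = T.F x + n * T.deg := by
  have hper : Function.Periodic (fun x => T.F x - x * T.deg) 1 := fun x => by
    simp only [T.lift_add_one]; ring
  have := hper.int_mul n x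
  simp only [mul_one] at this
  linarith

lemma deriv_F_add_intCast (x : ℝ) (n : ℤ) : deriv T.F (x + n) = deriv T.F x := by
  rw [← deriv_comp_add_const, funext fun y => T.F_add_intCast y n, deriv_add_const]

lemma equivIco_coe (x : ℝ) :
    (AddCircle.equivIco 1 0 (x : Circle1) : ℝ) = x + ((-⌊x⌋ : ℤ) : ℝ) := by
  rw [AddCircle.coe_equivIco_mk_apply, div_one, mul_one, Int.fract, Int.cast_neg, sub_eq_add_neg]

lemma toMap_coe (x : ℝ) : T.toMap x = (T.F x : Circle1) := by
  rw [toMap, equivIco_coe, F_add_intCast]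
  exact_mod_cast coe_add_intCast (T.F x) (-⌊x⌋ * T.deg)

lemma dmap_coe (x : ℝ) : T.dmap x = deriv T.F x := by
  rw [dmap, equivIco_coe, deriv_F_add_intCast]

lemma differentiable_F : Differentiable ℝ T.F := T.contDiff.differentiable two_ne_zero

lemma contDiff_deriv_F : ContDiff ℝ 1 (deriv T.F) := T.contDiff.deriv'

lemma continuous_toMap : Continuous T.toMap := by
  refine continuous_of_comp_coe ?_
  simp only [toMap_coe]
  exact (AddCircle.continuous_mk' 1).comp T.contDiff.continuous

lemma continuous_dmap : Continuous T.dmap := by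
  refine continuous_of_comp_coe ?_
  simpa only [dmap_coe] using T.contDiff_deriv_F.continuous

lemma abs_deriv_F_sub_le (x y : ℝ) : |deriv T.F x - deriv T.F y| ≤ Astar * |x - y| :=
  convex_univ.norm_image_sub_le_of_norm_deriv_le
    (fun z _ => T.contDiff_deriv_F.differentiable one_ne_zero z)
    (fun z _ => T.second_bound z) (mem_univ y) (mem_univ x)

lemma mul_sub_le_F_sub {x y : ℝ} (h : x ≤ y) : lam * (y - x) ≤ T.F y - T.F x :=
  mul_sub_le_image_sub_of_le_deriv T.differentiable_F T.expanding h

lemma deriv_F_pos (hlam : 0 < lam) (x : ℝ) : 0 < deriv T.F x := hlam.trans_le (T.expanding x)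

lemma strictMono_F (hlam : 0 < lam) : StrictMono T.F := strictMono_of_deriv_pos (T.deriv_F_pos hlam)

lemma surjective_F (hlam : 0 < lam) : Function.Surjective T.F := by
  refine T.contDiff.continuous.surjective ?_ ?_
  · refine tendsto_atTop_mono' _ ?_
      (tendsto_atTop_add_const_right _ (T.F 0) (tendsto_id.const_mul_atTop hlam))
    filter_upwards [eventually_ge_atTop 0] with x hx
    have := T.mul_sub_le_F_sub hx
    simp only [id]
    linarith
  · refine tendsto_atBot_mono' _ ?_
      (tendsto_atBot_add_const_right _ (T.F 0) (tendsto_id.const_mul_atBot hlam))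
    filter_upwards [eventually_le_atBot 0] with x hx
    have := T.mul_sub_le_F_sub hx
    simp only [id]
    linarith

/-- The inverse of the lift of an expanding circle map. -/
noncomputable def liftInv (hlam : 0 < lam) : ℝ ≃o ℝ :=
  ((T.strictMono_F hlam).orderIsoOfSurjective T.F (T.surjective_F hlam)).symm

@[simp]
lemma F_liftInv (hlam : 0 < lam) (x : ℝ) : T.F (T.liftInv hlam x) = x :=
  (T.liftInv hlam).symm_apply_apply x

@[simp]
lemma liftInv_F (hlam : 0 < lam) (x : ℝ) : T.liftInv hlam (T.F x) = x :=
  (T.liftInv hlam).apply_symm_apply x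

lemma liftInv_add_deg (hlam : 0 < lam) (x : ℝ) :
    T.liftInv hlam (x + T.deg) = T.liftInv hlam x + 1 := by
  rw [← T.liftInv_F hlam (T.liftInv hlam x + 1), T.lift_add_one, F_liftInv]

lemma mul_abs_liftInv_sub_le (hlam : 0 < lam) (x y : ℝ) :
    lam * |T.liftInv hlam x - T.liftInv hlam y| ≤ |x - y| := by
  wlog h : y ≤ x generalizing x y
  · rw [abs_sub_comm, abs_sub_comm x]; exact this y x (le_of_not_ge h)
  have hG : T.liftInv hlam y ≤ T.liftInv hlam x := (T.liftInv hlam).monotone h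
  rw [abs_of_nonneg (sub_nonneg.2 hG), abs_of_nonneg (sub_nonneg.2 h)]
  simpa using T.mul_sub_le_F_sub hG

lemma deg_pos (hlam : 0 < lam) : 0 < T.deg := by
  have h := T.mul_sub_le_F_sub (zero_le_one' ℝ)
  have hF := T.lift_add_one 0
  rw [zero_add] at hF
  exact_mod_cast (show (0 : ℝ) < T.deg by linarith)

lemma coe_toNat_deg (hlam : 0 < lam) : (T.deg.toNat : ℝ) = T.deg := by
  exact_mod_cast Int.toNat_of_nonneg (T.deg_pos hlam).le

lemma bijective_liftInv_fibre (hlam : 0 < lam) (x : ℝ) :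
    Function.Bijective fun k : Fin T.deg.toNat =>
      (⟨(T.liftInv hlam (x + (k : ℕ)) : ℝ), by
        rw [toMap_coe, F_liftInv, coe_add_natCast]⟩ :
        {y : Circle1 // T.toMap y = x}) := by
  have hmono := (T.liftInv hlam).strictMono
  have hmem (k : Fin T.deg.toNat) : T.liftInv hlam (x + (k : ℕ)) ∈
      Ico (T.liftInv hlam x) (T.liftInv hlam x + 1) := by
    have hk : ((k : ℕ) : ℝ) < T.deg := T.coe_toNat_deg hlam ▸ Nat.cast_lt.2 k.2
    rw [← liftInv_add_deg]
    exact ⟨hmono.monotone (by simp), hmono (by simpa using hk)⟩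
  refine ⟨fun k l hkl => ?_, fun ⟨y, hy⟩ => ?_⟩
  · have := (AddCircle.coe_eq_coe_iff_of_mem_Ico (hmem k) (hmem l)).1 (Subtype.mk.inj hkl)
    simpa [Fin.ext_iff] using (T.liftInv hlam).injective this
  · obtain ⟨v, hvmem, hvy⟩ := exists_mem_Ico_coe_eq (T.liftInv hlam x) y
    obtain ⟨n, hn⟩ : ∃ n : ℤ, T.F v = x + n := by
      rw [← hvy, toMap_coe, ← sub_eq_zero, ← AddCircle.coe_sub, AddCircle.coe_eq_zero_iff] at hy
      obtain ⟨n, hn⟩ := hy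
      exact ⟨n, by linarith [show (n : ℝ) = T.F v - x by simpa using hn]⟩
    have hFmono := T.strictMono_F hlam
    have hn₀ : 0 ≤ n := by
      have := hFmono.monotone hvmem.1
      rw [F_liftInv, hn] at this
      exact_mod_cast (show (0 : ℝ) ≤ n by linarith)
    have hn₁ : n < T.deg := by
      have := hFmono hvmem.2
      rw [T.lift_add_one, F_liftInv, hn] at this
      exact_mod_cast (show (n : ℝ) < T.deg by linarith)
    refine ⟨⟨n.toNat, by omega⟩, Subtype.ext ?_⟩
    have hcast : ((n.toNat : ℕ) : ℝ) = n := by exact_mod_cast Int.toNat_of_nonneg hn₀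
    simp only [hcast, ← hn, liftInv_F, hvy]

end CM

section Transfer

variable {lam Astar : ℝ} (T : CM lam Astar) {ψ : Circle1 → ℝ}

lemma transfer_coe (hlam : 0 < lam) (ψ : Circle1 → ℝ) (x : ℝ) :
    transfer T ψ x = ∑ k ∈ Finset.range T.deg.toNat,
      ψ (T.liftInv hlam (x + k) : ℝ) / deriv T.F (T.liftInv hlam (x + k)) := by
  let e := Equiv.ofBijective _ (T.bijective_liftInv_fibre hlam x)
  calc transfer T ψ x
      = ∑' k : Fin T.deg.toNat, ψ (e k) / T.dmap (e k) := (e.tsum_eq fun y => ψ y / T.dmap y).symm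
    _ = ∑ k : Fin T.deg.toNat, ψ (T.liftInv hlam (x + (k : ℕ)) : ℝ) /
          deriv T.F (T.liftInv hlam (x + (k : ℕ))) := by
        simp only [tsum_fintype, e, Equiv.ofBijective_apply, CM.dmap_coe]
    _ = _ := Fin.sum_univ_eq_sum_range (fun k : ℕ =>
        ψ (T.liftInv hlam (x + k) : ℝ) / deriv T.F (T.liftInv hlam (x + k))) _

lemma transfer_comp_mul (g ψ : Circle1 → ℝ) :
    transfer T (fun c => g (T.toMap c) * ψ c) = fun c => g c * transfer T ψ c := by
  funext c
  simp only [transfer, ← tsum_mul_left]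
  exact tsum_congr fun y => by rw [y.2, mul_div_assoc]

end Transfer

namespace CM

variable {lam Astar : ℝ} (T : CM lam Astar)

lemma Astar_nonneg (T : CM lam Astar) : 0 ≤ Astar := (abs_nonneg _).trans (T.second_bound 0)

lemma image_F_Ioc_liftInv (hlam : 0 < lam) (a b : ℝ) :
    T.F '' Ioc (T.liftInv hlam a) (T.liftInv hlam b) = Ioc a b := by
  have h := (T.liftInv hlam).symm.image_Ioc (T.liftInv hlam a) (T.liftInv hlam b)
  rwa [OrderIso.symm_apply_apply, OrderIso.symm_apply_apply] at h

lemma abs_deriv_smul_branch (hlam : 0 < lam) (u : ℝ → ℝ) (y : ℝ) :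
    |deriv T.F y| • (u (T.liftInv hlam (T.F y)) / deriv T.F (T.liftInv hlam (T.F y))) = u y := by
  rw [liftInv_F, abs_of_pos (T.deriv_F_pos hlam y), smul_eq_mul,
    mul_div_cancel₀ _ (T.deriv_F_pos hlam y).ne']

lemma integrableOn_branch (hlam : 0 < lam) {u : ℝ → ℝ} {a b : ℝ}
    (hu : IntegrableOn u (Ioc (T.liftInv hlam a) (T.liftInv hlam b))) :
    IntegrableOn (fun x => u (T.liftInv hlam x) / deriv T.F (T.liftInv hlam x)) (Ioc a b) := by
  rw [← T.image_F_Ioc_liftInv hlam, integrableOn_image_iff_integrableOn_abs_deriv_smul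
    measurableSet_Ioc (fun y _ => (T.differentiable_F y).hasDerivAt.hasDerivWithinAt)
    (T.strictMono_F hlam).injective.injOn]
  simpa only [T.abs_deriv_smul_branch hlam u] using hu

lemma integral_branch (hlam : 0 < lam) (u : ℝ → ℝ) {a b : ℝ} (hab : a ≤ b) :
    ∫ x in a..b, u (T.liftInv hlam x) / deriv T.F (T.liftInv hlam x) =
      ∫ y in T.liftInv hlam a..T.liftInv hlam b, u y := by
  rw [intervalIntegral.integral_of_le hab,
    intervalIntegral.integral_of_le ((T.liftInv hlam).monotone hab), ← T.image_F_Ioc_liftInv hlam,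
    integral_image_eq_integral_abs_deriv_smul measurableSet_Ioc
      (fun y _ => (T.differentiable_F y).hasDerivAt.hasDerivWithinAt)
      (T.strictMono_F hlam).injective.injOn]
  simp only [T.abs_deriv_smul_branch hlam u]

end CM

lemma exists_forall_abs_le_of_continuous {X : Type*} [TopologicalSpace X] [CompactSpace X]
    {f : X → ℝ} (hf : Continuous f) : ∃ B, ∀ x, |f x| ≤ B := by
  simpa using isCompact_univ.exists_bound_of_continuousOn hf.continuousOn

section Transfer

variable {lam Astar : ℝ} (T : CM lam Astar) {ψ : Circle1 → ℝ}

lemma intervalIntegrable_branch (hlam : 0 < lam) (hψ : Integrable ψ) {a b : ℝ} (hab : a ≤ b) :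
    IntervalIntegrable
      (fun x => ψ (T.liftInv hlam x : ℝ) / deriv T.F (T.liftInv hlam x)) volume a b :=
  (intervalIntegrable_iff_integrableOn_Ioc_of_le hab).2 <|
    T.integrableOn_branch hlam (u := fun y => ψ y) <|
      (intervalIntegrable_iff_integrableOn_Ioc_of_le ((T.liftInv hlam).monotone hab)).1
        (intervalIntegrable_coe hψ _ _)

lemma intervalIntegrable_branch_add (hlam : 0 < lam) (hψ : Integrable ψ) (k : ℝ) :
    IntervalIntegrable
      (fun x => ψ (T.liftInv hlam (x + k) : ℝ) / deriv T.F (T.liftInv hlam (x + k)))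
      volume 0 1 := by
  simpa using (intervalIntegrable_branch T hlam hψ (a := 0 + k) (b := 1 + k)
    (by linarith)).comp_add_right k

lemma integrable_transfer (hlam : 0 < lam) (hψ : Integrable ψ) : Integrable (transfer T ψ) := by
  rw [integrable_iff_integrableOn_coe 0]
  simp only [transfer_coe T hlam]
  rw [zero_add]
  exact integrable_finsetSum _ fun k _ =>
    (intervalIntegrable_iff_integrableOn_Ioc_of_le zero_le_one).1
      (intervalIntegrable_branch_add T hlam hψ k)

lemma integral_transfer (hlam : 0 < lam) (hψ : Integrable ψ) :
    ∫ c, transfer T ψ c = ∫ c, ψ c := by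
  let p : ℝ → ℝ := fun x => ψ (T.liftInv hlam x : ℝ) / deriv T.F (T.liftInv hlam x)
  have hpieces : ∑ k ∈ Finset.range T.deg.toNat, ∫ x in (k : ℝ)..(k + 1 : ℕ), p x =
      ∫ x in ((0 : ℕ) : ℝ)..T.deg.toNat, p x :=
    intervalIntegral.sum_integral_adjacent_intervals fun k _ =>
      intervalIntegrable_branch T hlam hψ (Nat.cast_le.2 k.le_succ)
  calc ∫ c, transfer T ψ c
      = ∫ x in (0 : ℝ)..0 + 1, transfer T ψ x := (AddCircle.intervalIntegral_preimage 1 0 _).symm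
    _ = ∫ x in (0 : ℝ)..1, ∑ k ∈ Finset.range T.deg.toNat, p (x + k) := by
        simp only [transfer_coe T hlam, zero_add, p]
    _ = ∑ k ∈ Finset.range T.deg.toNat, ∫ x in (0 : ℝ)..1, p (x + k) :=
        intervalIntegral.integral_finsetSum fun k _ => intervalIntegrable_branch_add T hlam hψ k
    _ = ∑ k ∈ Finset.range T.deg.toNat, ∫ x in (k : ℝ)..(k + 1 : ℕ), p x := by
        simp only [intervalIntegral.integral_comp_add_right, zero_add, Nat.cast_succ,
          add_comm (1 : ℝ)]
    _ = ∫ x in (0 : ℝ)..T.deg, p x := by rw [hpieces, T.coe_toNat_deg hlam, Nat.cast_zero]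
    _ = ∫ y in T.liftInv hlam 0..T.liftInv hlam T.deg, ψ y :=
        T.integral_branch hlam (fun y => ψ y) (by exact_mod_cast (T.deg_pos hlam).le)
    _ = ∫ y in T.liftInv hlam 0..T.liftInv hlam 0 + 1, ψ y := by
        rw [← T.liftInv_add_deg, zero_add]
    _ = ∫ c, ψ c := AddCircle.intervalIntegral_preimage 1 _ _

lemma integrable_continuous_mul {g : Circle1 → ℝ} (hg : Continuous g) (hψ : Integrable ψ) :
    Integrable fun c => g c * ψ c := by
  obtain ⟨B, hB⟩ := exists_forall_abs_le_of_continuous hg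
  exact hψ.bdd_mul hg.aestronglyMeasurable (Eventually.of_forall hB)

lemma integral_mul_transfer (hlam : 0 < lam) {g : Circle1 → ℝ} (hg : Continuous g)
    (hψ : Integrable ψ) : ∫ c, g c * transfer T ψ c = ∫ c, g (T.toMap c) * ψ c := by
  have h := integral_transfer T hlam (integrable_continuous_mul (hg.comp T.continuous_toMap) hψ)
  simpa only [Function.comp_apply, transfer_comp_mul] using h

end Transfer

/-- `u` is nonnegative and, where it does not vanish, `log u` is `L`-Lipschitz on `s`. -/
def LogLipOn (L : ℝ) (s : Set ℝ) (u : ℝ → ℝ) : Prop :=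
  ∀ x ∈ s, 0 ≤ u x ∧ ∀ y ∈ s, u x ≤ Real.exp (L * |x - y|) * u y

namespace LogLipOn

variable {L L' : ℝ} {s : Set ℝ} {u v : ℝ → ℝ}

lemma mono (hL : L ≤ L') (hu : LogLipOn L s u) : LogLipOn L' s u := fun x hx =>
  ⟨(hu x hx).1, fun y hy => ((hu x hx).2 y hy).trans
    (mul_le_mul_of_nonneg_right (by gcongr) (hu y hy).1)⟩

lemma sum {ι : Type*} {t : Finset ι} {w : ι → ℝ → ℝ} (hw : ∀ i ∈ t, LogLipOn L s (w i)) :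
    LogLipOn L s fun x => ∑ i ∈ t, w i x := fun x hx =>
  ⟨Finset.sum_nonneg fun i hi => (hw i hi x hx).1, fun y hy => by
    rw [Finset.mul_sum]
    exact Finset.sum_le_sum fun i hi => (hw i hi x hx).2 y hy⟩

lemma mul (hu : LogLipOn L s u) (hv : LogLipOn L' s v) :
    LogLipOn (L + L') s fun x => u x * v x := fun x hx =>
  ⟨mul_nonneg (hu x hx).1 (hv x hx).1, fun y hy => by
    calc u x * v x
        ≤ (Real.exp (L * |x - y|) * u y) * (Real.exp (L' * |x - y|) * v y) :=
          mul_le_mul ((hu x hx).2 y hy) ((hv x hx).2 y hy) (hv x hx).1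
            (mul_nonneg (Real.exp_pos _).le (hu y hy).1)
      _ = Real.exp ((L + L') * |x - y|) * (u y * v y) := by
          rw [add_mul, Real.exp_add]; ring⟩

lemma comp {t : Set ℝ} {φ : ℝ → ℝ} {c : ℝ} (hL : 0 ≤ L) (hu : LogLipOn L s u)
    (hφ : MapsTo φ t s) (hc : ∀ x y, |φ x - φ y| ≤ c * |x - y|) :
    LogLipOn (L * c) t fun x => u (φ x) := fun x hx =>
  ⟨(hu _ (hφ hx)).1, fun y hy => ((hu _ (hφ hx)).2 _ (hφ hy)).trans <| by
    have := (hu _ (hφ hy)).1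
    rw [mul_assoc]
    gcongr
    exact hc x y⟩

lemma inv (hu : LogLipOn L s u) (hpos : ∀ x ∈ s, 0 < u x) : LogLipOn L s fun x => (u x)⁻¹ :=
  fun x hx => ⟨(inv_pos.2 (hpos x hx)).le, fun y hy => by
    rw [inv_le_iff_one_le_mul₀ (hpos x hx), mul_right_comm, ← div_eq_mul_inv,
      one_le_div (hpos y hy), abs_sub_comm]
    exact (hu y hy).2 x hx⟩

lemma of_abs_sub_le {K : ℝ} (hu : ∀ x ∈ s, 0 ≤ u x)
    (hK : ∀ x ∈ s, ∀ y ∈ s, |u x - u y| ≤ K * |x - y|) (hL : ∀ x ∈ s, K ≤ L * u x) :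
    LogLipOn L s u := fun x hx => ⟨hu x hx, fun y hy => by
  calc u x ≤ K * |x - y| + u y := by linarith [le_abs_self (u x - u y), hK x hx y hy]
    _ ≤ L * u y * |x - y| + u y := by gcongr; exact hL y hy
    _ = (L * |x - y| + 1) * u y := by ring
    _ ≤ Real.exp (L * |x - y|) * u y :=
        mul_le_mul_of_nonneg_right (Real.add_one_le_exp _) (hu y hy)⟩

/-- Subtracting a small enough constant costs a factor `β` in the Lipschitz constant, by
Bernoulli's inequality `1 + β (e^a - 1) ≤ e^(β a)`. -/
lemma sub_const {β c : ℝ} (hL : 0 ≤ L) (hβ : 1 ≤ β) (hu : LogLipOn L s u)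
    (h : ∀ x ∈ s, β * c ≤ (β - 1) * u x) : LogLipOn (β * L) s fun x => u x - c := fun x hx => by
  have hsub {y : ℝ} (hy : y ∈ s) : 0 ≤ u y - c := by
    have := h y hy
    nlinarith [(hu y hy).1]
  refine ⟨hsub hx, fun y hy => ?_⟩
  set e := Real.exp (L * |x - y|)
  have he : 1 ≤ e := Real.one_le_exp (by positivity)
  have hbernoulli : 1 + β * (e - 1) ≤ Real.exp (β * L * |x - y|) := by
    have := one_add_mul_self_le_rpow_one_add (s := e - 1) (by linarith) hβ
    rwa [add_sub_cancel, ← Real.exp_mul, mul_comm _ β, ← mul_assoc] at this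
  calc u x - c ≤ e * u y - c := by gcongr; exact (hu x hx).2 y hy
    _ ≤ (1 + β * (e - 1)) * (u y - c) := by nlinarith [h y hy]
    _ ≤ _ := mul_le_mul_of_nonneg_right hbernoulli (hsub hy)

end LogLipOn

/-- The cone of functions that are log-Lipschitz with constant `L` on the circle cut at some
point, the value at the cut being arbitrary. -/
structure LogLipCone (L : ℝ) (ψ : Circle1 → ℝ) : Prop where
  integrable : Integrable ψ
  exists_cut : ∃ z : ℝ, LogLipOn L (Ioo z (z + 1)) fun x => ψ x

lemma CM.logLipOn_deriv_F {lam Astar : ℝ} (T : CM lam Astar) (hlam : 0 < lam) (s : Set ℝ) :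
    LogLipOn (Astar / lam) s (deriv T.F) :=
  .of_abs_sub_le (fun x _ => (T.deriv_F_pos hlam x).le) (fun x _ y _ => T.abs_deriv_F_sub_le x y)
    fun x _ => by
      rw [div_mul_eq_mul_div, le_div_iff₀ hlam]
      exact mul_le_mul_of_nonneg_left (T.expanding x) T.Astar_nonneg

namespace LogLipCone

variable {L L' : ℝ} {ψ : Circle1 → ℝ}

lemma mono (hL : L ≤ L') (hψ : LogLipCone L ψ) : LogLipCone L' ψ :=
  ⟨hψ.integrable, hψ.exists_cut.imp fun _ h => h.mono hL⟩

lemma ae_nonneg (hψ : LogLipCone L ψ) : ∀ᵐ c, 0 ≤ ψ c := by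
  obtain ⟨z, hz⟩ := hψ.exists_cut
  filter_upwards [ae_exists_mem_Ioo_coe_eq z] with _ ⟨x, hx, hxc⟩
  exact hxc ▸ (hz x hx).1

lemma const (hL : 0 ≤ L) {m : ℝ} (hm : 0 ≤ m) : LogLipCone L fun _ => m :=
  ⟨integrable_const m, 0, .of_abs_sub_le (fun _ _ => hm) (K := 0) (by simp)
    fun _ _ => by positivity⟩

lemma integral_le_exp_mul (hL : 0 ≤ L) (hψ : Integrable ψ) {z : ℝ}
    (hz : LogLipOn L (Ioo z (z + 1)) fun x => ψ x) {x : ℝ} (hx : x ∈ Ioo z (z + 1)) :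
    ∫ c, ψ c ≤ Real.exp L * ψ x := by
  have hle : ∀ᵐ c, ψ c ≤ Real.exp L * ψ x := by
    filter_upwards [ae_exists_mem_Ioo_coe_eq z] with _ ⟨y, hy, hyc⟩
    rw [← hyc]
    refine ((hz y hy).2 x hx).trans (mul_le_mul_of_nonneg_right ?_ (hz x hx).1)
    have : |y - x| ≤ 1 := abs_le.2 ⟨by linarith [hx.2, hy.1], by linarith [hx.1, hy.2]⟩
    exact Real.exp_le_exp.2 (mul_le_of_le_one_right hL this)
  simpa using integral_mono_ae hψ (integrable_const _) hle

lemma mul_lipschitz (hψ : LogLipCone L ψ) {K : NNReal} {g : Circle1 → ℝ} (hg : LipschitzWith K g)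
    (hg₀ : ∀ c, 0 ≤ g c) {D : ℝ} (hD : ∀ c, K ≤ D * g c) :
    LogLipCone (D + L) fun c => g c * ψ c := by
  refine ⟨integrable_continuous_mul hg.continuous hψ.integrable, hψ.exists_cut.imp fun z hz =>
    .mul (.of_abs_sub_le (K := K) (fun x _ => hg₀ x) (fun x _ y _ => ?_) fun x _ => hD x) hz⟩
  exact (hg.dist_le_mul _ _).trans (mul_le_mul_of_nonneg_left (dist_coe_coe_le x y) K.2)

lemma sub_mul_integral (hL : 0 ≤ L) (hψ : LogLipCone L ψ) {β κ : ℝ} (hβ : 1 ≤ β) (hκ₀ : 0 ≤ κ)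
    (hκ : β * κ * Real.exp L ≤ β - 1) :
    LogLipCone (β * L) fun c => ψ c - κ * ∫ c, ψ c := by
  obtain ⟨z, hz⟩ := hψ.exists_cut
  refine ⟨hψ.integrable.sub (integrable_const _), z,
    hz.sub_const hL hβ fun x hx => ?_⟩
  calc β * (κ * ∫ c, ψ c) ≤ β * (κ * (Real.exp L * ψ x)) := by
        gcongr; exact integral_le_exp_mul hL hψ.integrable hz hx
    _ = β * κ * Real.exp L * ψ x := by ring
    _ ≤ (β - 1) * ψ x := mul_le_mul_of_nonneg_right hκ (hz x hx).1

variable {lam Astar : ℝ} (T : CM lam Astar)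

/-- If `ψ` is cut at `z`, then every inverse branch of `T` maps the circle cut at `T z` into the
circle cut at `z`. -/
protected lemma transfer (hlam : 0 < lam) (hL : 0 ≤ L) (hψ : LogLipCone L ψ) :
    LogLipCone ((L + Astar / lam) / lam) (transfer T ψ) := by
  have hA := T.Astar_nonneg
  obtain ⟨z, hz⟩ := hψ.exists_cut
  refine ⟨integrable_transfer T hlam hψ.integrable, T.F z, ?_⟩
  have hmono := (T.liftInv hlam).strictMono
  simp only [transfer_coe T hlam, div_eq_mul_inv _ lam]
  refine .sum fun k hk => ?_
  have hkd : (k : ℝ) + 1 ≤ T.deg := by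
    rw [← T.coe_toNat_deg hlam]
    exact_mod_cast Finset.mem_range.1 hk
  refine (hz.mul ((T.logLipOn_deriv_F hlam _).inv fun x _ => T.deriv_F_pos hlam x)).comp
    (φ := fun x => T.liftInv hlam (x + k)) (by positivity) (fun x hx => ?_) fun x y => ?_
  · constructor
    · rw [← T.liftInv_F hlam z]
      exact hmono (by linarith [hx.1, k.cast_nonneg (α := ℝ)])
    · rw [← T.liftInv_F hlam (z + 1), T.lift_add_one]
      exact hmono (by linarith [hx.2])
  · rw [inv_mul_eq_div, le_div_iff₀' hlam]
    simpa using T.mul_abs_liftInv_sub_le hlam (x + k) (y + k)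

end LogLipCone

section Iterates

variable {lam Astar : ℝ}

lemma mapIter_add (S : ℕ → CM lam Astar) (i j : ℕ) :
    mapIter S (i + j) = mapIter (fun m => S (i + m)) j ∘ mapIter S i := by
  induction j with
  | zero => rfl
  | succ j ih => rw [← add_assoc, mapIter, ih, mapIter, Function.comp_assoc, add_assoc]

lemma mapIter_const (R : CM lam Astar) (i : ℕ) : mapIter (fun _ => R) i = R.toMap^[i] := by
  induction i with
  | zero => rfl
  | succ i ih => rw [Function.iterate_succ', ← ih, mapIter]

lemma continuous_mapIter (S : ℕ → CM lam Astar) (i : ℕ) : Continuous (mapIter S i) := by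
  induction i with
  | zero => exact continuous_id
  | succ i ih => exact (S (i + 1)).continuous_toMap.comp ih

lemma integrable_transferIter (hlam : 0 < lam) (S : ℕ → CM lam Astar) (i : ℕ)
    {ψ : Circle1 → ℝ} (hψ : Integrable ψ) : Integrable (transferIter S i ψ) := by
  induction i with
  | zero => exact hψ
  | succ i ih => exact integrable_transfer _ hlam ih

lemma integral_mul_transferIter (hlam : 0 < lam) (S : ℕ → CM lam Astar) (i : ℕ)
    {g ψ : Circle1 → ℝ} (hg : Continuous g) (hψ : Integrable ψ) :
    ∫ c, g c * transferIter S i ψ c = ∫ c, g (mapIter S i c) * ψ c := by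
  induction i generalizing g with
  | zero => rfl
  | succ i ih =>
    rw [transferIter, integral_mul_transfer _ hlam hg (integrable_transferIter hlam S i hψ)]
    exact ih (hg.comp (S (i + 1)).continuous_toMap)

lemma integral_transferIter (hlam : 0 < lam) (S : ℕ → CM lam Astar) (i : ℕ)
    {ψ : Circle1 → ℝ} (hψ : Integrable ψ) : ∫ c, transferIter S i ψ c = ∫ c, ψ c := by
  simpa using integral_mul_transferIter hlam S i (continuous_const (y := (1 : ℝ))) hψ

end Iterates

section MemoryLoss

variable {lam Astar L : ℝ}

lemma LogLipCone.abs_integral_mul_le {g ψ : Circle1 → ℝ} {B : ℝ} (hψ : LogLipCone L ψ)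
    (hB : ∀ c, |g c| ≤ B) : |∫ c, g c * ψ c| ≤ B * ∫ c, ψ c := by
  rw [← integral_const_mul]
  refine norm_integral_le_of_norm_le (f := fun c => g c * ψ c) (hψ.integrable.const_mul B) ?_
  filter_upwards [hψ.ae_nonneg] with c hc
  rw [norm_mul, Real.norm_of_nonneg hc]
  exact mul_le_mul_of_nonneg_right (hB c) hc

lemma LogLipCone.exists_transfer_remainder {β κ : ℝ} (hlam : 0 < lam) (hL : 0 ≤ L) (hβ : 1 ≤ β)
    (hβL : (β * L + Astar / lam) / lam ≤ L) (hκ₀ : 0 ≤ κ) (hκ : β * κ * Real.exp L ≤ β - 1)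
    (T : CM lam Astar) {ψ : Circle1 → ℝ} (hψ : LogLipCone L ψ) :
    ∃ φ, LogLipCone L φ ∧ ∫ c, φ c = (1 - κ) * ∫ c, ψ c ∧ ∀ g : Circle1 → ℝ, Continuous g →
      ∫ c, g c * φ c =
        (∫ c, g (T.toMap c) * ψ c) - ∫ c, g (T.toMap c) * (κ * ∫ c, ψ c) := by
  have hsub := hψ.sub_mul_integral hL hβ hκ₀ hκ
  refine ⟨_, (hsub.transfer T hlam (by positivity)).mono hβL, ?_, fun g hg => ?_⟩
  · rw [integral_transfer T hlam hsub.integrable,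
      integral_sub hψ.integrable (integrable_const _)]
    simp only [integral_const, probReal_univ, smul_eq_mul]
    ring
  · have hgT : Continuous fun c => g (T.toMap c) := hg.comp T.continuous_toMap
    rw [integral_mul_transfer T hlam hg hsub.integrable,
      ← integral_sub (integrable_continuous_mul hgT hψ.integrable)
        (integrable_continuous_mul hgT (integrable_const _))]
    simp only [mul_sub]

/-- At every step the same constant can be removed from both densities, which reduces the masses
that remain to be compared by the factor `1 - κ`. -/
lemma abs_integral_mapIter_sub_le {β κ : ℝ} (hlam : 0 < lam) (hL : 0 ≤ L) (hβ : 1 ≤ β)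
    (hβL : (β * L + Astar / lam) / lam ≤ L) (hκ₀ : 0 ≤ κ) (hκ : β * κ * Real.exp L ≤ β - 1)
    {g : Circle1 → ℝ} {B : ℝ} (hg : Continuous g) (hB : ∀ c, |g c| ≤ B) (n : ℕ)
    (S : ℕ → CM lam Astar) {ψ₁ ψ₂ : Circle1 → ℝ} (h₁ : LogLipCone L ψ₁) (h₂ : LogLipCone L ψ₂)
    (hmass : ∫ c, ψ₁ c = ∫ c, ψ₂ c) :
    |(∫ c, g (mapIter S n c) * ψ₁ c) - ∫ c, g (mapIter S n c) * ψ₂ c| ≤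
      2 * B * (∫ c, ψ₁ c) * (1 - κ) ^ n := by
  induction n generalizing S ψ₁ ψ₂ with
  | zero =>
    simp only [mapIter, id_eq, pow_zero, mul_one]
    linarith [abs_sub (∫ c, g c * ψ₁ c) (∫ c, g c * ψ₂ c), h₁.abs_integral_mul_le hB,
      hmass ▸ h₂.abs_integral_mul_le hB]
  | succ n ih =>
    obtain ⟨φ₁, hφ₁, hmass₁, hint₁⟩ :=
      h₁.exists_transfer_remainder hlam hL hβ hβL hκ₀ hκ (S 1)
    obtain ⟨φ₂, hφ₂, hmass₂, hint₂⟩ :=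
      h₂.exists_transfer_remainder hlam hL hβ hβL hκ₀ hκ (S 1)
    have hcont : Continuous fun c => g (mapIter (fun i => S (1 + i)) n c) :=
      hg.comp (continuous_mapIter _ n)
    have hstep := ih (fun i => S (1 + i)) hφ₁ hφ₂ (by rw [hmass₁, hmass₂, hmass])
    rw [hint₁ _ hcont, hint₂ _ hcont, hmass₁, hmass, sub_sub_sub_cancel_right] at hstep
    rw [add_comm n 1, mapIter_add, pow_add, hmass]
    exact hstep.trans_eq (by ring)

/-- The maps in `CM lam Astar` preserve the cone of constant `L` and forget densities in the cone
of constant `L + 1` at the exponential rate `θ`. The larger cone contains the products of densities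
in the smaller one with suitably translated Lipschitz observables. -/
structure MemoryLoss (lam Astar L θ : ℝ) : Prop where
  lam_pos : 0 < lam
  L_nonneg : 0 ≤ L
  theta_nonneg : 0 ≤ θ
  theta_lt_one : θ < 1
  transfer_mem : ∀ (T : CM lam Astar) {ψ : Circle1 → ℝ}, LogLipCone L ψ →
    LogLipCone L (transfer T ψ)
  decay : ∀ {g : Circle1 → ℝ} {B : ℝ}, Continuous g → (∀ c, |g c| ≤ B) →
    ∀ (n : ℕ) (S : ℕ → CM lam Astar) {ψ₁ ψ₂ : Circle1 → ℝ}, LogLipCone (L + 1) ψ₁ →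
      LogLipCone (L + 1) ψ₂ → ∫ c, ψ₁ c = ∫ c, ψ₂ c →
      |(∫ c, g (mapIter S n c) * ψ₁ c) - ∫ c, g (mapIter S n c) * ψ₂ c| ≤
        2 * B * (∫ c, ψ₁ c) * θ ^ n

theorem exists_memoryLoss (hlam : 1 < lam) (Astar : ℝ) {L₀ : ℝ} (hL₀ : 0 ≤ L₀) :
    ∃ L θ, L₀ ≤ L ∧ MemoryLoss lam Astar L θ := by
  set a := Astar / lam
  obtain ⟨L, hL, haL⟩ : ∃ L, L₀ ≤ L ∧ a ≤ (lam - 1) * L :=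
    ⟨max L₀ (a / (lam - 1)), le_max_left _ _, (div_le_iff₀' (by linarith)).1 (le_max_right _ _)⟩
  have hL_nonneg := hL₀.trans hL
  have hlam₀ : 0 < lam := by linarith
  set β := lam - a / (L + 1)
  have hβ : 1 < β := by
    have : a / (L + 1) < lam - 1 := (div_lt_iff₀ (by linarith)).2 (by linarith)
    linarith
  have hβL : β * (L + 1) + a = lam * (L + 1) := by
    simp only [β]
    field_simp
    ring
  set κ := (β - 1) / (β * Real.exp (L + 1))
  have hexp : 1 ≤ Real.exp (L + 1) := Real.one_le_exp (by linarith)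
  have hκ : 0 < κ := div_pos (by linarith) (by positivity)
  refine ⟨L, 1 - κ, hL, hlam₀, hL_nonneg, ?_, by linarith, fun T ψ hψ => ?_,
    fun hg hB n S ψ₁ ψ₂ =>
      abs_integral_mapIter_sub_le hlam₀ (by linarith) hβ.le ?_ hκ.le ?_ hg hB n S⟩
  · rw [sub_nonneg, div_le_one (by positivity)]
    nlinarith
  · refine (hψ.transfer T hlam₀ hL_nonneg).mono ((div_le_iff₀' hlam₀).2 ?_)
    linarith
  · rw [div_le_iff₀' hlam₀, hβL]
  · exact le_of_eq (by simp only [κ]; field_simp)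

namespace MemoryLoss

variable {θ : ℝ}

lemma transferIter_mem (h : MemoryLoss lam Astar L θ) (S : ℕ → CM lam Astar) (i : ℕ)
    {ψ : Circle1 → ℝ} (hψ : LogLipCone L ψ) : LogLipCone L (transferIter S i ψ) := by
  induction i with
  | zero => exact hψ
  | succ i ih => exact h.transfer_mem _ ih

end MemoryLoss

end MemoryLoss

section LipschitzApproximation

/-- The locally Lipschitz functions, as a subalgebra of `C(X, ℝ)`. On a compact space these are the
Lipschitz functions, and in the local form their stability under products is immediate. -/
def locallyLipschitzSubalgebra (X : Type*) [PseudoMetricSpace X] : Subalgebra ℝ C(X, ℝ) where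
  carrier := {g | LocallyLipschitz g}
  mul_mem' {a b} ha hb := by
    have hmul : ContDiff ℝ 1 fun p : ℝ × ℝ => p.1 * p.2 := by fun_prop
    exact hmul.locallyLipschitz.comp (ha.prodMk hb)
  add_mem' {a b} ha hb := LocallyLipschitz.add ha hb
  algebraMap_mem' := LocallyLipschitz.const

lemma separatesPoints_locallyLipschitzSubalgebra {X : Type*} [MetricSpace X] :
    (locallyLipschitzSubalgebra X).SeparatesPoints := by
  intro x y hxy
  let g : C(X, ℝ) := ⟨fun c => dist c y, by fun_prop⟩
  have hg : LipschitzWith 1 g := LipschitzWith.dist_left y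
  exact ⟨g, ⟨g, hg.locallyLipschitz, rfl⟩, by simpa [g] using hxy⟩

variable {X : Type*} [MetricSpace X] [CompactSpace X]

theorem exists_lipschitzWith_abs_sub_lt {g : X → ℝ} (hg : Continuous g) {ε : ℝ}
    (hε : 0 < ε) : ∃ (K : NNReal) (h : X → ℝ), LipschitzWith K h ∧ ∀ x, |h x - g x| < ε := by
  obtain ⟨⟨h, hh⟩, hgh⟩ :=
    ContinuousMap.exists_mem_subalgebra_near_continuous_of_separatesPoints _
      separatesPoints_locallyLipschitzSubalgebra g hg ε hε
  obtain ⟨K, hK⟩ := LocallyLipschitzOn.exists_lipschitzOnWith_of_compact isCompact_univ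
    (LocallyLipschitz.locallyLipschitzOn hh)
  exact ⟨K, h, lipschitzOnWith_univ.1 hK, hgh⟩

theorem exists_lipschitzWith_integral_abs_sub_le [MeasurableSpace X] [BorelSpace X]
    {μ : Measure X} [IsProbabilityMeasure μ] {ψ : X → ℝ} (hψ : Integrable ψ μ) {ε : ℝ}
    (hε : 0 < ε) :
    ∃ (K : NNReal) (h : X → ℝ), LipschitzWith K h ∧ ∫ x, |ψ x - h x| ∂μ ≤ ε := by
  obtain ⟨g, hψg, hg⟩ := hψ.exists_boundedContinuous_integral_sub_le (half_pos hε)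
  obtain ⟨K, h, hK, hhg⟩ := exists_lipschitzWith_abs_sub_lt g.continuous (half_pos hε)
  have hh : Integrable h μ :=
    hK.continuous.integrable_of_hasCompactSupport (.of_compactSpace _)
  refine ⟨K, h, hK, ?_⟩
  calc ∫ x, |ψ x - h x| ∂μ
      ≤ ∫ x, (‖ψ x - g x‖ + ε / 2) ∂μ := by
        refine integral_mono (hψ.sub hh).abs ((hψ.sub hg).norm.add (integrable_const _)) fun x => ?_
        have hx := hhg x
        rw [abs_sub_comm] at hx
        exact (abs_sub_le _ (g x) _).trans (add_le_add_right hx.le _)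
    _ = (∫ x, ‖ψ x - g x‖ ∂μ) + ε / 2 := by
        have hnorm : Integrable (fun x => ‖ψ x - g x‖) μ := (hψ.sub hg).norm
        rw [integral_add hnorm (integrable_const _)]
        simp
    _ ≤ ε := by linarith

end LipschitzApproximation

lemma abs_integral_mul_le_mul_integral_abs {g ψ : Circle1 → ℝ} {B : ℝ}
    (hψ : Integrable ψ) (hB : ∀ c, |g c| ≤ B) :
    |∫ c, g c * ψ c| ≤ B * ∫ c, |ψ c| := by
  rw [← integral_const_mul]
  refine norm_integral_le_of_norm_le (f := fun c => g c * ψ c) (hψ.abs.const_mul B)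
    (Eventually.of_forall fun c => ?_)
  rw [norm_mul]
  exact mul_le_mul_of_nonneg_right (hB c) (abs_nonneg _)

lemma LogLipCone.add_const_mul {L D : ℝ} {φ f : Circle1 → ℝ} {K : NNReal} (hφ : LogLipCone L φ)
    (hf : LipschitzWith K f) (hD : ∀ c, |f c| ≤ D) :
    LogLipCone (L + 1) fun c => (f c + (D + K)) * φ c := by
  have hlip : LipschitzWith K fun c => f c + (D + K) := by
    simpa using hf.add (LipschitzWith.const (D + K : ℝ))
  have hle (c : Circle1) : (K : ℝ) ≤ f c + (D + K) := by linarith [neg_le_of_abs_le (hD c)]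
  rw [add_comm L]
  exact hφ.mul_lipschitz hlip (fun c => K.coe_nonneg.trans (hle c)) fun c => by simpa using hle c

namespace MemoryLoss

variable {lam Astar L θ B : ℝ}

/-- Adding a constant to `f` does not change the difference that is estimated, and makes the
product with `φ` a member of the larger cone. -/
lemma abs_integral_mapIter_mul_sub_le (h : MemoryLoss lam Astar L θ) {φ f g : Circle1 → ℝ}
    (hφ : LogLipCone L φ) (hφ₁ : ∫ c, φ c = 1) {K : NNReal} (hf : LipschitzWith K f) {D : ℝ}
    (hD : ∀ c, |f c| ≤ D) (hg : Continuous g) (hB : ∀ c, |g c| ≤ B) (S : ℕ → CM lam Astar)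
    (n : ℕ) :
    |(∫ c, g (mapIter S n c) * (f c * φ c)) - (∫ c, f c * φ c) * ∫ c, g (mapIter S n c) * φ c| ≤
      2 * B * (2 * D + K) * θ ^ n := by
  set m := ∫ c, f c * φ c
  have hgn : Continuous fun c => g (mapIter S n c) := hg.comp (continuous_mapIter S n)
  have hfφ := integrable_continuous_mul hf.continuous hφ.integrable
  have hm : |m| ≤ D := by simpa [hφ₁] using hφ.abs_integral_mul_le hD
  have hB₀ : 0 ≤ B := (abs_nonneg _).trans (hB 0)
  have hf_shift := hφ.add_const_mul hf hD
  have hm_shift : LogLipCone (L + 1) fun c => (m + (D + K)) * φ c :=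
    hφ.add_const_mul ((LipschitzWith.const m).weaken zero_le) fun _ => hm
  have hmass : ∫ c, (f c + (D + K)) * φ c = m + (D + K) := by
    simp only [add_mul (f _)]
    rw [integral_add hfφ (hφ.integrable.const_mul _), integral_const_mul, hφ₁, mul_one]
  have hdecay := h.decay hg hB n S hf_shift hm_shift
    (by rw [hmass, integral_const_mul, hφ₁, mul_one])
  rw [hmass, ← integral_sub (integrable_continuous_mul hgn hf_shift.integrable)
    (integrable_continuous_mul hgn hm_shift.integrable)] at hdecay
  rw [← integral_const_mul, ← integral_sub (integrable_continuous_mul hgn hfφ)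
    ((integrable_continuous_mul hgn hφ.integrable).const_mul m)]
  calc |∫ c, (g (mapIter S n c) * (f c * φ c) - m * (g (mapIter S n c) * φ c))|
      = |∫ c, (g (mapIter S n c) * ((f c + (D + K)) * φ c) -
          g (mapIter S n c) * ((m + (D + K)) * φ c))| := by
        congr 2 with c
        ring
    _ ≤ 2 * B * (m + (D + K)) * θ ^ n := hdecay
    _ ≤ 2 * B * (2 * D + K) * θ ^ n := by
        refine mul_le_mul_of_nonneg_right ?_ (pow_nonneg h.theta_nonneg n)
        exact mul_le_mul_of_nonneg_left (by linarith [le_of_abs_le hm]) (by positivity)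

lemma abs_integral_mapIter_mul_le_of_lipschitzWith (h : MemoryLoss lam Astar L θ)
    {ψ u g : Circle1 → ℝ} (hψ : Integrable ψ) (hψ₀ : ∫ c, ψ c = 0) {K : NNReal}
    (hu : LipschitzWith K u) {D : ℝ} (hD : ∀ c, |u c| ≤ D) (hg : Continuous g)
    (hB : ∀ c, |g c| ≤ B) (S : ℕ → CM lam Astar) (n : ℕ) :
    |∫ c, g (mapIter S n c) * ψ c| ≤
      2 * B * (∫ c, |ψ c - u c|) + 2 * B * (2 * D + K) * θ ^ n := by
  have hgn : Continuous fun c => g (mapIter S n c) := hg.comp (continuous_mapIter S n)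
  have hu_int : Integrable u :=
    hu.continuous.integrable_of_hasCompactSupport (.of_compactSpace _)
  have hcov := h.abs_integral_mapIter_mul_sub_le (LogLipCone.const h.L_nonneg zero_le_one)
    (by simp) hu hD hg hB S n
  have happrox := abs_integral_mul_le_mul_integral_abs (hψ.sub hu_int) fun c => hB (mapIter S n c)
  have hg_int := abs_integral_mul_le_mul_integral_abs (integrable_const (1 : ℝ))
    fun c => hB (mapIter S n c)
  have hmass : |∫ c, u c| ≤ ∫ c, |ψ c - u c| := by
    have := abs_integral_le_integral_abs (f := fun c => ψ c - u c) (μ := volume)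
    rwa [integral_sub hψ hu_int, hψ₀, zero_sub, abs_neg] at this
  simp only [Pi.sub_apply, mul_sub] at happrox
  rw [integral_sub (integrable_continuous_mul hgn hψ) (integrable_continuous_mul hgn hu_int)]
    at happrox
  simp only [mul_one, abs_one, integral_const, probReal_univ, smul_eq_mul] at hcov hg_int
  have hprod : |(∫ c, u c) * ∫ c, g (mapIter S n c)| ≤ (∫ c, |ψ c - u c|) * B := by
    rw [abs_mul]
    exact mul_le_mul hmass hg_int (abs_nonneg _) (integral_nonneg fun _ => abs_nonneg _)
  have htri := abs_add_three ((∫ c, g (mapIter S n c) * ψ c) - ∫ c, g (mapIter S n c) * u c)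
    ((∫ c, g (mapIter S n c) * u c) - (∫ c, u c) * ∫ c, g (mapIter S n c))
    ((∫ c, u c) * ∫ c, g (mapIter S n c))
  rw [sub_add_sub_cancel, sub_add_cancel] at htri
  linarith

theorem tendsto_integral_mapIter_mul_zero (h : MemoryLoss lam Astar L θ) {ψ g : Circle1 → ℝ}
    (hψ : Integrable ψ) (hψ₀ : ∫ c, ψ c = 0) (hg : Continuous g) (S : ℕ → CM lam Astar) :
    Tendsto (fun n => ∫ c, g (mapIter S n c) * ψ c) atTop (𝓝 0) := by
  obtain ⟨B, hB⟩ := exists_forall_abs_le_of_continuous hg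
  have hB₀ : 0 ≤ B := (abs_nonneg _).trans (hB 0)
  rw [Metric.tendsto_atTop]
  intro ε hε
  obtain ⟨K, u, hu, hψu⟩ :=
    exists_lipschitzWith_integral_abs_sub_le hψ (ε := ε / (4 * (B + 1))) (by positivity)
  obtain ⟨D, hD⟩ := exists_forall_abs_le_of_continuous hu.continuous
  have hdecay : Tendsto (fun n : ℕ => 2 * B * (2 * D + K) * θ ^ n) atTop (𝓝 0) := by
    simpa using (tendsto_pow_atTop_nhds_zero_of_lt_one h.theta_nonneg h.theta_lt_one).const_mul
      (2 * B * (2 * D + K))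
  obtain ⟨N, hN⟩ := (hdecay.eventually (gt_mem_nhds (half_pos hε))).exists_forall_of_atTop
  refine ⟨N, fun n hn => ?_⟩
  have happrox : 2 * B * (∫ c, |ψ c - u c|) ≤ ε / 2 := by
    refine (mul_le_mul_of_nonneg_left hψu (by positivity)).trans ?_
    rw [mul_div_assoc', div_le_div_iff₀ (by positivity) (by norm_num)]
    nlinarith
  rw [Real.dist_eq, sub_zero]
  linarith [hN n hn, h.abs_integral_mapIter_mul_le_of_lipschitzWith hψ hψ₀ hu
    hD hg hB S n]

end MemoryLoss

section DensityMeasure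

open ProbabilityTheory

/-- The measure with density `ρ` with respect to Lebesgue measure on the circle; negative values
of `ρ` are truncated to `0`. -/
noncomputable def densityMeasure (ρ : Circle1 → ℝ) : Measure Circle1 :=
  volume.withDensity fun c => ENNReal.ofReal (ρ c)

variable {ρ : Circle1 → ℝ}

lemma isProbabilityMeasure_densityMeasure (hρ : Integrable ρ) (hρ₀ : 0 ≤ᵐ[volume] ρ)
    (hρ₁ : ∫ c, ρ c = 1) : IsProbabilityMeasure (densityMeasure ρ) := by
  refine ⟨?_⟩
  rw [densityMeasure, withDensity_apply _ MeasurableSet.univ, Measure.restrict_univ,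
    ← ofReal_integral_eq_lintegral_ofReal hρ hρ₀, hρ₁, ENNReal.ofReal_one]

lemma integral_densityMeasure (hρ : Integrable ρ) (hρ₀ : 0 ≤ᵐ[volume] ρ) (g : Circle1 → ℝ) :
    ∫ c, g c ∂densityMeasure ρ = ∫ c, g c * ρ c := by
  rw [densityMeasure, integral_withDensity_eq_integral_toReal_smul₀
    hρ.aemeasurable.ennreal_ofReal (Eventually.of_forall fun _ => ENNReal.ofReal_lt_top)]
  refine integral_congr_ae ?_
  filter_upwards [hρ₀] with c hc
  rw [ENNReal.toReal_ofReal hc, smul_eq_mul, mul_comm]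

end DensityMeasure

section InvariantDensity

variable {lam Astar L θ : ℝ} {R : CM lam Astar} {ρ g : Circle1 → ℝ}

lemma IsSRBDensity.ae_nonneg (hρ : IsSRBDensity R ρ) : 0 ≤ᵐ[volume] ρ :=
  Eventually.of_forall hρ.1.2.2

lemma IsSRBDensity.integral_mapIter_mul (hρ : IsSRBDensity R ρ) (hg : Continuous g) (n : ℕ) :
    ∫ c, g (mapIter (fun _ => R) n c) * ρ c = ∫ c, g c * ρ c := by
  have hmap : Measure.map R.toMap (densityMeasure ρ) = densityMeasure ρ := hρ.2.2
  induction n generalizing g with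
  | zero => rfl
  | succ n ih =>
    refine (ih (hg.comp R.continuous_toMap)).trans ?_
    simp only [← integral_densityMeasure hρ.1.1 hρ.ae_nonneg, Function.comp_apply]
    rw [← integral_map R.continuous_toMap.aemeasurable hg.aestronglyMeasurable, hmap]

theorem MemoryLoss.abs_integral_mul_sub_integral_mapIter_le (h : MemoryLoss lam Astar L θ)
    (hρ : IsSRBDensity R ρ) {φ : Circle1 → ℝ} (hφ : LogLipCone L φ) (hφ₁ : ∫ c, φ c = 1)
    {B : ℝ} (hg : Continuous g) (hB : ∀ c, |g c| ≤ B) (n : ℕ) :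
    |(∫ c, g c * ρ c) - ∫ c, g (mapIter (fun _ => R) n c) * φ c| ≤ 2 * B * θ ^ n := by
  have hgn : Continuous fun c => g (mapIter (fun _ => R) n c) := hg.comp (continuous_mapIter _ n)
  have hconv : Tendsto
      (fun j => ∫ c, g (mapIter (fun _ => R) n c) * transferIter (fun _ => R) j φ c) atTop
      (𝓝 (∫ c, g c * ρ c)) := by
    have hmass : ∫ c, (φ c - ρ c) = 0 := by
      rw [integral_sub hφ.integrable hρ.1.1, hρ.1.2.1, hφ₁, sub_self]
    refine tendsto_sub_nhds_zero_iff.1 ((h.tendsto_integral_mapIter_mul_zero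
      (hφ.integrable.sub hρ.1.1) hmass hgn fun _ => R).congr fun j => ?_)
    have hcont : Continuous fun c => g (mapIter (fun _ => R) n (mapIter (fun _ => R) j c)) :=
      hgn.comp (continuous_mapIter _ j)
    have hinv : ∫ c, g (mapIter (fun _ => R) n (mapIter (fun _ => R) j c)) * ρ c =
        ∫ c, g c * ρ c :=
      (hρ.integral_mapIter_mul hgn j).trans (hρ.integral_mapIter_mul hg n)
    simp only [Pi.sub_apply, mul_sub]
    rw [integral_sub (integrable_continuous_mul hcont hφ.integrable)
      (integrable_continuous_mul hcont hρ.1.1), hinv,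
      integral_mul_transferIter h.lam_pos _ j hgn hφ.integrable]
  refine le_of_tendsto (hconv.sub_const _).abs (Eventually.of_forall fun j => ?_)
  have hmass : ∫ c, transferIter (fun _ => R) j φ c = 1 := by
    rw [integral_transferIter h.lam_pos _ j hφ.integrable, hφ₁]
  have hle : L ≤ L + 1 := by linarith
  simpa [hmass] using h.decay hg hB n (fun _ => R)
    ((h.transferIter_mem (fun _ => R) j hφ).mono hle) (hφ.mono hle) (hmass.trans hφ₁.symm)

end InvariantDensity

section OrbitCovariance

open ProbabilityTheory

variable {lam Astar L θ : ℝ}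

/-- The covariance of `f ∘ S_i ∘ ⋯ ∘ S_1` and `f ∘ S_j ∘ ⋯ ∘ S_1` under the measure with
density `ρ`. -/
noncomputable def orbitCov (S : ℕ → CM lam Astar) (ρ f : Circle1 → ℝ) (i j : ℕ) : ℝ :=
  (∫ c, f (mapIter S i c) * f (mapIter S j c) * ρ c) -
    (∫ c, f (mapIter S i c) * ρ c) * ∫ c, f (mapIter S j c) * ρ c

variable {ρ φ f : Circle1 → ℝ} {B : ℝ} {K : NNReal} {R : CM lam Astar}

lemma covariance_densityMeasure (hρ : Integrable ρ) (hρ₀ : 0 ≤ᵐ[volume] ρ)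
    (hρ₁ : ∫ c, ρ c = 1) {X Y : Circle1 → ℝ} (hX : Continuous X) (hY : Continuous Y) :
    cov[X, Y; densityMeasure ρ] =
      (∫ c, X c * Y c * ρ c) - (∫ c, X c * ρ c) * ∫ c, Y c * ρ c := by
  have := isProbabilityMeasure_densityMeasure hρ hρ₀ hρ₁
  rw [covariance_eq_sub (hX.memLp_of_hasCompactSupport (.of_compactSpace _))
    (hY.memLp_of_hasCompactSupport (.of_compactSpace _))]
  simp only [integral_densityMeasure hρ hρ₀, Pi.mul_apply]

lemma orbitCov_add (hlam : 0 < lam) (S : ℕ → CM lam Astar) (hρ : Integrable ρ)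
    (hf : Continuous f) (i j k : ℕ) :
    orbitCov S ρ f (i + j) (i + k) =
      orbitCov (fun m => S (i + m)) (transferIter S i ρ) f j k := by
  have hfS : ∀ m, Continuous fun c => f (mapIter (fun m => S (i + m)) m c) :=
    fun m => hf.comp (continuous_mapIter _ m)
  simp only [orbitCov, mapIter_add, Function.comp_apply]
  rw [integral_mul_transferIter hlam S i (hfS j) hρ, integral_mul_transferIter hlam S i (hfS k) hρ,
    integral_mul_transferIter hlam S i ((hfS j).fun_mul (hfS k)) hρ]

lemma IsSRBDensity.orbitCov_add (hρ : IsSRBDensity R ρ) (hf : Continuous f) (i j k : ℕ) :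
    orbitCov (fun _ => R) ρ f (i + j) (i + k) = orbitCov (fun _ => R) ρ f j k := by
  have hfR : ∀ m, Continuous fun c => f (mapIter (fun _ => R) m c) :=
    fun m => hf.comp (continuous_mapIter _ m)
  simp only [orbitCov, mapIter_add, Function.comp_apply]
  rw [hρ.integral_mapIter_mul (hfR j), hρ.integral_mapIter_mul (hfR k),
    hρ.integral_mapIter_mul ((hfR j).fun_mul (hfR k))]

namespace MemoryLoss

lemma abs_orbitCov_le (h : MemoryLoss lam Astar L θ) (hφ : LogLipCone L φ) (hφ₁ : ∫ c, φ c = 1)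
    (hf : LipschitzWith K f) (hB : ∀ c, |f c| ≤ B) (S : ℕ → CM lam Astar) (i k : ℕ) :
    |orbitCov S φ f i (i + k)| ≤ 2 * B * (2 * B + K) * θ ^ k := by
  have hmass : ∫ c, transferIter S i φ c = 1 := by
    rw [integral_transferIter h.lam_pos S i hφ.integrable, hφ₁]
  have hcov := orbitCov_add h.lam_pos S hφ.integrable hf.continuous i 0 k
  rw [add_zero] at hcov
  rw [hcov]
  refine le_trans (le_of_eq ?_) (h.abs_integral_mapIter_mul_sub_le (h.transferIter_mem S i hφ)
    hmass hf hB hf.continuous hB (fun m => S (i + m)) k)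
  simp only [orbitCov, mapIter, id_eq]
  congr 3 with c
  ring

end MemoryLoss

lemma abs_sub_mul_sub_sub_mul_le {a₁ a₂ b₁ b₂ c₁ c₂ B u v w : ℝ} (ha : |a₁ - a₂| ≤ u)
    (hb : |b₁ - b₂| ≤ v) (hc : |c₁ - c₂| ≤ w) (hb₂ : |b₂| ≤ B) (hc₁ : |c₁| ≤ B) :
    |(a₁ - b₁ * c₁) - (a₂ - b₂ * c₂)| ≤ u + v * B + B * w := by
  calc |(a₁ - b₁ * c₁) - (a₂ - b₂ * c₂)|
      = |(a₁ - a₂) + (-((b₁ - b₂) * c₁)) + (-(b₂ * (c₁ - c₂)))| := by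
        congr 1
        ring
    _ ≤ |a₁ - a₂| + |b₁ - b₂| * |c₁| + |b₂| * |c₁ - c₂| := by
        refine (abs_add_three _ _ _).trans_eq ?_
        rw [abs_neg, abs_neg, abs_mul, abs_mul]
    _ ≤ u + v * B + B * w := by
        gcongr
        · exact (abs_nonneg _).trans hb
        · exact (abs_nonneg _).trans hb₂

lemma abs_mul_le_mul_self (hB : ∀ c, |f c| ≤ B) (x y : Circle1) : |f x * f y| ≤ B * B := by
  rw [abs_mul]
  exact mul_le_mul (hB x) (hB y) (abs_nonneg _) ((abs_nonneg _).trans (hB x))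

namespace MemoryLoss

theorem abs_orbitCov_srb_sub_le (h : MemoryLoss lam Astar L θ) (hρ : IsSRBDensity R ρ)
    (hφ : LogLipCone L φ) (hφ₁ : ∫ c, φ c = 1) (hf : Continuous f) (hB : ∀ c, |f c| ≤ B)
    (n k : ℕ) :
    |orbitCov (fun _ => R) ρ f 0 k - orbitCov (fun _ => R) φ f n (n + k)| ≤
      6 * B * B * θ ^ n := by
  have hfk : Continuous fun c => f (mapIter (fun _ => R) k c) := hf.comp (continuous_mapIter _ k)
  have hjoint := h.abs_integral_mul_sub_integral_mapIter_le hρ hφ hφ₁ (hf.mul hfk)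
    (fun c => abs_mul_le_mul_self hB c (mapIter (fun _ => R) k c)) n
  have hfirst := h.abs_integral_mul_sub_integral_mapIter_le hρ hφ hφ₁ hf hB n
  have hsecond := h.abs_integral_mul_sub_integral_mapIter_le hρ hφ hφ₁ hfk
    (fun c => hB (mapIter (fun _ => R) k c)) n
  have hfirst_le : |∫ c, f (mapIter (fun _ => R) n c) * φ c| ≤ B := by
    simpa [hφ₁] using hφ.abs_integral_mul_le fun c => hB (mapIter (fun _ => R) n c)
  have hsecond_le : |∫ c, f (mapIter (fun _ => R) k c) * ρ c| ≤ B := by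
    have := abs_integral_mul_le_mul_integral_abs hρ.1.1 fun c => hB (mapIter (fun _ => R) k c)
    simpa [abs_of_nonneg (hρ.1.2.2 _), hρ.1.2.1] using this
  simp only [orbitCov, mapIter_add, Function.comp_apply, mapIter, id_eq]
  refine (abs_sub_mul_sub_sub_mul_le hjoint hfirst hsecond hfirst_le hsecond_le).trans_eq ?_
  ring

theorem abs_orbitCov_srb_le (h : MemoryLoss lam Astar L θ) (hρ : IsSRBDensity R ρ)
    (hf : LipschitzWith K f) (hB : ∀ c, |f c| ≤ B) (k : ℕ) :
    |orbitCov (fun _ => R) ρ f 0 k| ≤ 2 * B * (2 * B + K) * θ ^ k := by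
  have hpow : Tendsto (fun n : ℕ => 6 * B * B * θ ^ n) atTop (𝓝 0) := by
    simpa using (tendsto_pow_atTop_nhds_zero_of_lt_one h.theta_nonneg h.theta_lt_one).const_mul
      (6 * B * B)
  have hone : LogLipCone L fun _ => 1 := LogLipCone.const h.L_nonneg zero_le_one
  have hlim := hpow.add_const (2 * B * (2 * B + K) * θ ^ k)
  rw [zero_add] at hlim
  refine ge_of_tendsto hlim (Eventually.of_forall fun n => ?_)
  have happrox := h.abs_orbitCov_srb_sub_le hρ hone (by simp) hf.continuous hB n k
  have hdecay := h.abs_orbitCov_le hone (by simp) hf hB (fun _ => R) n k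
  have htri := abs_add_le
    (orbitCov (fun _ => R) ρ f 0 k - orbitCov (fun _ => R) (fun _ => 1) f n (n + k))
    (orbitCov (fun _ => R) (fun _ => 1) f n (n + k))
  rw [sub_add_cancel] at htri
  linarith

end MemoryLoss

end OrbitCovariance

section AsymptoticVariance

open ProbabilityTheory

variable {lam Astar L θ : ℝ} {ρ φ f : Circle1 → ℝ} {B : ℝ} {K : NNReal} {R : CM lam Astar}

/-- The Green–Kubo form of `σ̂²(f)` for the stationary process `f ∘ R^k`, where `ρ` is the density
of the invariant measure of `R`. -/
noncomputable def asymptoticVariance (R : CM lam Astar) (ρ f : Circle1 → ℝ) : ℝ :=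
  greenKubo (orbitCov (fun _ => R) ρ f 0)

lemma covariance_comp_mapIter (hρ : Integrable ρ) (hρ₀ : 0 ≤ᵐ[volume] ρ) (hρ₁ : ∫ c, ρ c = 1)
    (hf : Continuous f) (S : ℕ → CM lam Astar) (i j : ℕ) :
    cov[f ∘ mapIter S i, f ∘ mapIter S j; densityMeasure ρ] = orbitCov S ρ f i j :=
  covariance_densityMeasure hρ hρ₀ hρ₁ (hf.comp (continuous_mapIter S i))
    (hf.comp (continuous_mapIter S j))

lemma memLp_comp_mapIter (hρ : Integrable ρ) (hρ₀ : 0 ≤ᵐ[volume] ρ) (hρ₁ : ∫ c, ρ c = 1)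
    (hf : Continuous f) (S : ℕ → CM lam Astar) (i : ℕ) :
    MemLp (f ∘ mapIter S i) 2 (densityMeasure ρ) := by
  have := isProbabilityMeasure_densityMeasure hρ hρ₀ hρ₁
  exact (hf.comp (continuous_mapIter S i)).memLp_of_hasCompactSupport (.of_compactSpace _)

lemma IsSRBDensity.integral_sq_birkhoffSum (hρ : IsSRBDensity R ρ) (hf : Continuous f) (m : ℕ) :
    ∫ c, (∑ k ∈ Finset.range m, (f (R.toMap^[k] c) - ∫ y, f y * ρ y)) ^ 2 * ρ c =
      Var[∑ k ∈ Finset.range m, f ∘ mapIter (fun _ => R) k; densityMeasure ρ] := by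
  have := isProbabilityMeasure_densityMeasure hρ.1.1 hρ.ae_nonneg hρ.1.2.1
  have hmem := memLp_comp_mapIter hρ.1.1 hρ.ae_nonneg hρ.1.2.1 hf fun _ => R
  have hmean (k : ℕ) : ∫ c, (f ∘ mapIter (fun _ => R) k) c ∂densityMeasure ρ = ∫ y, f y * ρ y := by
    rw [integral_densityMeasure hρ.1.1 hρ.ae_nonneg]
    exact hρ.integral_mapIter_mul hf k
  rw [variance_eq_integral (memLp_finsetSum' _ fun k _ => hmem k).aemeasurable,
    integral_densityMeasure hρ.1.1 hρ.ae_nonneg]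
  simp only [Finset.sum_apply]
  rw [integral_finsetSum _ fun k _ => (hmem k).integrable one_le_two]
  simp only [hmean, ← Finset.sum_sub_distrib]
  simp only [Function.comp_apply, mapIter_const]

theorem MemoryLoss.tendsto_integral_sq_birkhoffSum (h : MemoryLoss lam Astar L θ)
    (hρ : IsSRBDensity R ρ) (hf : LipschitzWith K f) :
    Tendsto (fun m : ℕ => ∫ c, ((m : ℝ)⁻¹ *
        (∑ k ∈ Finset.range m, (f (R.toMap^[k] c) - ∫ y, f y * ρ y)) ^ 2) * ρ c) atTop
      (𝓝 (asymptoticVariance R ρ f)) := by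
  obtain ⟨B, hB⟩ := exists_forall_abs_le_of_continuous hf.continuous
  have := isProbabilityMeasure_densityMeasure hρ.1.1 hρ.ae_nonneg hρ.1.2.1
  have hstat (i k : ℕ) : orbitCov (fun _ => R) ρ f i (i + k) = orbitCov (fun _ => R) ρ f 0 k := by
    simpa using hρ.orbitCov_add hf.continuous i 0 k
  have hcov (i k : ℕ) : cov[f ∘ mapIter (fun _ => R) i, f ∘ mapIter (fun _ => R) (i + k);
      densityMeasure ρ] = orbitCov (fun _ => R) ρ f 0 k := by
    rw [covariance_comp_mapIter hρ.1.1 hρ.ae_nonneg hρ.1.2.1 hf.continuous, hstat]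
  have hvar := abs_variance_sum_sub_sum_greenKubo_le
    (memLp_comp_mapIter hρ.1.1 hρ.ae_nonneg hρ.1.2.1 hf.continuous fun _ => R)
    h.theta_nonneg h.theta_lt_one fun i k => by
      rw [hcov]
      exact h.abs_orbitCov_srb_le hρ hf hB k
  simp only [hcov, Finset.sum_const, Finset.card_range, nsmul_eq_mul] at hvar
  rw [tendsto_iff_norm_sub_tendsto_zero]
  have hlim := (tendsto_inv_atTop_nhds_zero_nat (𝕜 := ℝ)).mul_const
    (2 * (2 * B * (2 * B + K) / (1 - θ)) / (1 - θ))
  rw [zero_mul] at hlim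
  refine squeeze_zero' (Eventually.of_forall fun _ => norm_nonneg _) ?_ hlim
  filter_upwards [eventually_gt_atTop 0] with m hm
  have hm' : (m : ℝ) ≠ 0 := by exact_mod_cast hm.ne'
  simp only [mul_assoc (m : ℝ)⁻¹]
  rw [integral_const_mul, hρ.integral_sq_birkhoffSum hf.continuous,
    ← inv_mul_cancel_left₀ hm' (asymptoticVariance R ρ f), ← mul_sub, norm_mul,
    Real.norm_of_nonneg (by positivity)]
  exact mul_le_mul_of_nonneg_left (hvar m) (by positivity)

end AsymptoticVariance

section Perturbation

variable {lam Astar L θ : ℝ} {ρ φ f : Circle1 → ℝ} {B d : ℝ} {K : NNReal} {R : CM lam Astar}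

lemma dist_mapIter_le {Λ : NNReal} {δ : ℝ} (hR : LipschitzWith Λ R.toMap) (S : ℕ → CM lam Astar)
    (n : ℕ) (hS : ∀ m ∈ Finset.Icc 1 n, ∀ c, dist ((S m).toMap c) (R.toMap c) ≤ δ) (c : Circle1) :
    dist (mapIter S n c) (mapIter (fun _ => R) n c) ≤ δ * ∑ j ∈ Finset.range n, (Λ : ℝ) ^ j := by
  induction n with
  | zero => simp [mapIter]
  | succ n ih =>
    have hprev := ih fun m hm => hS m (Finset.Icc_subset_Icc_right n.le_succ hm)
    calc dist (mapIter S (n + 1) c) (mapIter (fun _ => R) (n + 1) c)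
        ≤ dist ((S (n + 1)).toMap (mapIter S n c)) (R.toMap (mapIter S n c)) +
            dist (R.toMap (mapIter S n c)) (R.toMap (mapIter (fun _ => R) n c)) :=
          dist_triangle _ _ _
      _ ≤ δ + Λ * (δ * ∑ j ∈ Finset.range n, (Λ : ℝ) ^ j) :=
          add_le_add (hS (n + 1) (by simp) _)
            ((hR.dist_le_mul _ _).trans (mul_le_mul_of_nonneg_left hprev Λ.2))
      _ = δ * ∑ j ∈ Finset.range (n + 1), (Λ : ℝ) ^ j := by
          rw [geom_sum_succ]
          ring

lemma abs_orbitCov_sub_orbitCov_le (hφ : LogLipCone L φ) (hφ₁ : ∫ c, φ c = 1)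
    (hf : LipschitzWith K f) (hB : ∀ c, |f c| ≤ B) {S S' : ℕ → CM lam Astar} {i j : ℕ}
    (hi : ∀ c, dist (mapIter S i c) (mapIter S' i c) ≤ d)
    (hj : ∀ c, dist (mapIter S j c) (mapIter S' j c) ≤ d) :
    |orbitCov S φ f i j - orbitCov S' φ f i j| ≤ 4 * B * (K * d) := by
  have hcont (S : ℕ → CM lam Astar) (k : ℕ) : Continuous fun c => f (mapIter S k c) :=
    hf.continuous.comp (continuous_mapIter S k)
  have hsub {g g' : Circle1 → ℝ} {e : ℝ} (hg : Continuous g) (hg' : Continuous g')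
      (he : ∀ c, |g c - g' c| ≤ e) : |(∫ c, g c * φ c) - ∫ c, g' c * φ c| ≤ e := by
    rw [← integral_sub (integrable_continuous_mul hg hφ.integrable)
      (integrable_continuous_mul hg' hφ.integrable)]
    simpa [hφ₁, sub_mul] using hφ.abs_integral_mul_le he
  have hle {k : ℕ} (hk : ∀ c, dist (mapIter S k c) (mapIter S' k c) ≤ d) (c : Circle1) :
      |f (mapIter S k c) - f (mapIter S' k c)| ≤ K * d :=
    (hf.dist_le_mul _ _).trans (mul_le_mul_of_nonneg_left (hk c) K.2)
  have hmean (S : ℕ → CM lam Astar) (k : ℕ) : |∫ c, f (mapIter S k c) * φ c| ≤ B := by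
    simpa [hφ₁] using hφ.abs_integral_mul_le fun c => hB (mapIter S k c)
  have hprod (c : Circle1) : |f (mapIter S i c) * f (mapIter S j c) -
      f (mapIter S' i c) * f (mapIter S' j c)| ≤ K * d * B + B * (K * d) := by
    have := abs_sub_mul_sub_sub_mul_le (a₁ := 0) (a₂ := 0) (u := 0) (by simp) (hle hi c)
      (hle hj c) (hB (mapIter S' i c)) (hB (mapIter S j c))
    rwa [zero_sub, zero_sub, neg_sub_neg, zero_add, abs_sub_comm] at this
  refine (abs_sub_mul_sub_sub_mul_le (hsub ((hcont S i).mul (hcont S j))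
    ((hcont S' i).mul (hcont S' j)) hprod) (hsub (hcont S i) (hcont S' i) (hle hi))
    (hsub (hcont S j) (hcont S' j) (hle hj)) (hmean S' i) (hmean S j)).trans_eq ?_
  ring

theorem MemoryLoss.abs_orbitCov_sub_srb_le (h : MemoryLoss lam Astar L θ) (hρ : IsSRBDensity R ρ)
    (hφ : LogLipCone L φ) (hφ₁ : ∫ c, φ c = 1) (hf : LipschitzWith K f) (hB : ∀ c, |f c| ≤ B)
    (S : ℕ → CM lam Astar) {Λ : NNReal} {δ : ℝ} (hR : LipschitzWith Λ R.toMap) (hδ : 0 ≤ δ)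
    (n k i : ℕ)
    (hS : ∀ m ∈ Finset.Icc 1 (n + k), ∀ c, dist ((S (i + m)).toMap c) (R.toMap c) ≤ δ) :
    |orbitCov S φ f (i + n) (i + n + k) - orbitCov (fun _ => R) ρ f 0 k| ≤
      4 * B * (K * (δ * ∑ j ∈ Finset.range (n + k), (Λ : ℝ) ^ j)) + 6 * B * B * θ ^ n := by
  have hmem := h.transferIter_mem S i hφ
  have hmass : ∫ c, transferIter S i φ c = 1 := by
    rw [integral_transferIter h.lam_pos S i hφ.integrable, hφ₁]
  have hsrb := h.abs_orbitCov_srb_sub_le hρ hmem hmass hf.continuous hB n k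
  have hdist {l : ℕ} (hl : l ≤ n + k) (c : Circle1) :
      dist (mapIter (fun m => S (i + m)) l c) (mapIter (fun _ => R) l c) ≤
        δ * ∑ j ∈ Finset.range (n + k), (Λ : ℝ) ^ j := by
    refine (dist_mapIter_le hR (fun m => S (i + m)) l
      (fun m hm => hS m (Finset.Icc_subset_Icc_right hl hm)) c).trans ?_
    gcongr
  have hpert := abs_orbitCov_sub_orbitCov_le hmem hmass hf hB (hdist (Nat.le_add_right n k))
    (hdist le_rfl)
  rw [add_assoc, orbitCov_add h.lam_pos S hφ.integrable hf.continuous i n (n + k)]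
  rw [abs_sub_comm] at hsrb
  exact (abs_sub_le _ _ _).trans (add_le_add hpert hsrb)

theorem MemoryLoss.exists_abs_greenKubo_orbitCov_sub_le (h : MemoryLoss lam Astar L θ)
    (hf : LipschitzWith K f) (Λ : NNReal) {ε : ℝ} (hε : 0 < ε) :
    ∃ Q : ℕ, ∃ δ > 0, ∀ (S : ℕ → CM lam Astar) (R : CM lam Astar) (φ ρ : Circle1 → ℝ),
      LogLipCone L φ → ∫ c, φ c = 1 → IsSRBDensity R ρ → LipschitzWith Λ R.toMap →
      ∀ i, Q ≤ i → (∀ m, i ≤ m + Q → m ≤ i + Q → ∀ c, dist ((S m).toMap c) (R.toMap c) ≤ δ) →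
      |greenKubo (fun k => orbitCov S φ f i (i + k)) -
        asymptoticVariance R ρ f| ≤ ε := by
  obtain ⟨B, hB⟩ := exists_forall_abs_le_of_continuous hf.continuous
  have hB₀ : 0 ≤ B := (abs_nonneg _).trans (hB 0)
  obtain ⟨k₀, τ, hτ, hclose⟩ := exists_abs_greenKubo_sub_le (2 * B * (2 * B + K)) h.theta_nonneg
    h.theta_lt_one hε
  obtain ⟨n, hn⟩ : ∃ n, 6 * B * B * θ ^ n < τ / 2 := by
    have hlim := (tendsto_pow_atTop_nhds_zero_of_lt_one h.theta_nonneg h.theta_lt_one).const_mul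
      (6 * B * B)
    rw [mul_zero] at hlim
    exact (hlim.eventually_lt_const (half_pos hτ)).exists
  set A := 4 * B * K * ∑ j ∈ Finset.range (n + k₀), (Λ : ℝ) ^ j
  obtain ⟨δ, hδ, hAδ⟩ := exists_pos_mul_lt (half_pos hτ) A
  refine ⟨n + k₀, δ, hδ, fun S R φ ρ hφ hφ₁ hρ hR i hi hS => hclose _ _
    (fun k => h.abs_orbitCov_le hφ hφ₁ hf hB S i k)
    (fun k => h.abs_orbitCov_srb_le hρ hf hB k) fun k hk => ?_⟩
  obtain ⟨i, rfl⟩ : ∃ j, i = j + n := ⟨i - n, by omega⟩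
  refine (h.abs_orbitCov_sub_srb_le hρ hφ hφ₁ hf hB S hR hδ.le n k i fun m hm => ?_).trans ?_
  · rw [Finset.mem_Icc] at hm
    exact hS (i + m) (by omega) (by omega)
  · have hsum : 4 * B * (K * (δ * ∑ j ∈ Finset.range (n + k), (Λ : ℝ) ^ j)) ≤ A * δ := by
      calc 4 * B * (K * (δ * ∑ j ∈ Finset.range (n + k), (Λ : ℝ) ^ j))
          ≤ 4 * B * (K * (δ * ∑ j ∈ Finset.range (n + k₀), (Λ : ℝ) ^ j)) := by gcongr
        _ = A * δ := by ring
    linarith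

end Perturbation

section LogLipschitzDensity

variable {L : ℝ} {ρ : Circle1 → ℝ}

lemma coe_zrep (z : Circle1) : ((zrep z : ℝ) : Circle1) = z := AddCircle.coe_equivIco

lemma arcCoord_coe {z : Circle1} {x : ℝ} (hx : x ∈ Ioc (zrep z) (zrep z + 1)) :
    arcCoord z (x : Circle1) = x :=
  AddCircle.equivIoc_coe_of_mem hx

lemma coe_ne_of_mem_Ioo_zrep {z : Circle1} {x : ℝ} (hx : x ∈ Ioo (zrep z) (zrep z + 1)) :
    (x : Circle1) ≠ z := by
  intro hxz
  have hcoe : ((zrep z + 1 : ℝ) : Circle1) = x := by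
    rw [hxz, AddCircle.coe_add_period, coe_zrep]
  have hend : arcCoord z ((zrep z + 1 : ℝ) : Circle1) = zrep z + 1 :=
    arcCoord_coe ⟨lt_add_one _, le_rfl⟩
  rw [hcoe, arcCoord_coe (Ioo_subset_Ioc_self hx)] at hend
  exact hx.2.ne hend

lemma memD.logLipCone (hρ : memD L ρ) : LogLipCone L ρ := by
  obtain ⟨hdens, hpos, z, hz⟩ := hρ
  refine ⟨hdens.1, zrep z, fun x hx => ⟨(hpos x).le, fun y hy => ?_⟩⟩
  have hlog := hz _ _ (coe_ne_of_mem_Ioo_zrep hx) (coe_ne_of_mem_Ioo_zrep hy)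
  rw [arcDist, arcCoord_coe (Ioo_subset_Ioc_self hx), arcCoord_coe (Ioo_subset_Ioc_self hy)]
    at hlog
  calc ρ x = Real.exp (Real.log (ρ x)) := (Real.exp_log (hpos x)).symm
    _ ≤ Real.exp (L * |x - y| + Real.log (ρ y)) :=
        Real.exp_le_exp.2 (sub_le_iff_le_add.1 ((le_abs_self _).trans hlog))
    _ = Real.exp (L * |x - y|) * ρ y := by rw [Real.exp_add, Real.exp_log (hpos y)]

end LogLipschitzDensity

section CurveAndArray

variable {lam Astar : ℝ}

lemma dist_toMap_le_dC1 (T₁ T₂ : CM lam Astar) (c : Circle1) :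
    dist (T₁.toMap c) (T₂.toMap c) ≤ dC1 T₁ T₂ :=
  (le_ciSup (isCompact_range (T₁.continuous_toMap.dist T₂.continuous_toMap)).bddAbove c).trans
    (le_add_of_nonneg_right (Real.iSup_nonneg fun _ => abs_nonneg _))

lemma abs_dmap_sub_le_dC1 (T₁ T₂ : CM lam Astar) (c : Circle1) :
    |T₁.dmap c - T₂.dmap c| ≤ dC1 T₁ T₂ :=
  (le_ciSup (isCompact_range (T₁.continuous_dmap.sub T₂.continuous_dmap).abs).bddAbove c).trans
    (le_add_of_nonneg_left (Real.iSup_nonneg fun _ => dist_nonneg))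

lemma CM.lipschitzWith_toMap (T : CM lam Astar) {Λ : NNReal} (hΛ : ∀ c, |T.dmap c| ≤ Λ) :
    LipschitzWith Λ T.toMap := by
  refine LipschitzWith.of_dist_le_mul fun x y => ?_
  obtain ⟨x, rfl⟩ := QuotientAddGroup.mk_surjective x
  obtain ⟨y₀, rfl⟩ := QuotientAddGroup.mk_surjective y
  obtain ⟨y, hy, hdist⟩ : ∃ y : ℝ, (y : Circle1) = (y₀ : Circle1) ∧
      dist (x : Circle1) (y₀ : Circle1) = |x - y| := by
    refine ⟨y₀ + (round (x - y₀) : ℤ), coe_add_intCast _ _, ?_⟩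
    rw [dist_eq_norm, ← AddCircle.coe_sub, UnitAddCircle.norm_eq, sub_sub]
  have hF : LipschitzWith Λ T.F := lipschitzWith_of_nnnorm_deriv_le T.differentiable_F fun z => by
    simpa [CM.dmap_coe, ← NNReal.coe_le_coe] using hΛ z
  calc dist (T.toMap (x : Circle1)) (T.toMap (y₀ : Circle1))
      = dist (T.F x : Circle1) (T.F y : Circle1) := by rw [← hy, T.toMap_coe, T.toMap_coe]
    _ ≤ |T.F x - T.F y| := dist_coe_coe_le _ _
    _ ≤ Λ * |x - y| := hF.dist_le_mul x y
    _ = Λ * dist (x : Circle1) (y₀ : Circle1) := by rw [hdist]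

variable {η : ℝ} {γ : ℝ → CM lam Astar}

lemma HolderCurve.exists_lipschitzWith (hη : 0 ≤ η) (hγ : HolderCurve η γ) :
    ∃ Λ : NNReal, ∀ t ∈ Icc (0 : ℝ) 1, LipschitzWith Λ (γ t).toMap := by
  obtain ⟨H, hH⟩ := hγ
  obtain ⟨D, hD⟩ := exists_forall_abs_le_of_continuous (γ 0).continuous_dmap
  refine ⟨(D + |H|).toNNReal, fun t ht => (γ t).lipschitzWith_toMap fun c => ?_⟩
  have hclose : |(γ t).dmap c - (γ 0).dmap c| ≤ |H| := by
    refine (abs_dmap_sub_le_dC1 _ _ c).trans ((hH t ht 0 ⟨le_rfl, zero_le_one⟩).trans ?_)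
    rw [sub_zero, abs_of_nonneg ht.1]
    exact (mul_le_mul_of_nonneg_right (le_abs_self H) (Real.rpow_nonneg ht.1 η)).trans
      (mul_le_of_le_one_right (abs_nonneg H) (Real.rpow_le_one ht.1 ht.2 hη))
  have habs := abs_sub_abs_le_abs_sub ((γ t).dmap c) ((γ 0).dmap c)
  exact le_trans (by linarith [hD c]) (Real.le_coe_toNNReal _)

lemma HolderCurve.exists_forall_dC1_le (hη : 0 < η) (hγ : HolderCurve η γ) {δ : ℝ} (hδ : 0 < δ) :
    ∃ r > 0, ∀ s ∈ Icc (0 : ℝ) 1, ∀ t ∈ Icc (0 : ℝ) 1, |s - t| < r → dC1 (γ s) (γ t) ≤ δ := by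
  obtain ⟨H, hH⟩ := hγ
  have hlim : Tendsto (fun u : ℝ => H * u ^ η) (𝓝 0) (𝓝 0) := by
    simpa [hη.ne'] using ((Real.continuousAt_rpow_const 0 η (Or.inr hη.le)).tendsto).const_mul H
  obtain ⟨r, hr, hr'⟩ := Metric.eventually_nhds_iff.1 (hlim.eventually_lt_const hδ)
  exact ⟨r, hr, fun s hs t ht hst => (hH s hs t ht).trans (hr' (by simpa using hst)).le⟩

lemma natCast_div_mem_Icc {n k : ℕ} (hk : k ≤ n) : (k : ℝ) / n ∈ Icc (0 : ℝ) 1 :=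
  ⟨by positivity, div_le_one_of_le₀ (by exact_mod_cast hk) n.cast_nonneg⟩

lemma ArrayApprox.eventually_dC1_le {Tarr : ℕ → ℕ → CM lam Astar} (hη : 0 < η)
    (hT : ArrayApprox η γ Tarr) {δ : ℝ} (hδ : 0 < δ) :
    ∀ᶠ n : ℕ in atTop, ∀ m ≤ n, dC1 (Tarr n m) (γ (m / n)) ≤ δ := by
  obtain ⟨M, hM⟩ := hT
  have hpow : Tendsto (fun n : ℕ => δ * (n : ℝ) ^ η) atTop atTop :=
    ((tendsto_rpow_atTop hη).comp tendsto_natCast_atTop_atTop).const_mul_atTop hδ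
  filter_upwards [hpow.eventually_ge_atTop M, eventually_ge_atTop 1] with n hn hn₁ m hm
  have hn₀ : (0 : ℝ) < n := by exact_mod_cast hn₁
  have hbound := hM n hn₁ _ (natCast_div_mem_Icc hm)
  rw [mul_div_cancel₀ _ hn₀.ne', Nat.floor_natCast] at hbound
  rw [mul_comm] at hn
  exact le_of_mul_le_mul_left (hbound.trans hn) (by positivity)

theorem ArrayApprox.eventually_dist_le {Tarr : ℕ → ℕ → CM lam Astar} (hη : 0 < η)
    (hγ : HolderCurve η γ) (hT : ArrayApprox η γ Tarr) {δ : ℝ} (hδ : 0 < δ) (Q : ℕ) :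
    ∀ᶠ n : ℕ in atTop, ∀ i ≤ n, ∀ m ≤ n, i ≤ m + Q → m ≤ i + Q →
      ∀ c, dist ((Tarr n m).toMap c) ((γ (i / n)).toMap c) ≤ δ := by
  obtain ⟨r, hr, hγr⟩ := hγ.exists_forall_dC1_le hη (half_pos hδ)
  filter_upwards [hT.eventually_dC1_le hη (half_pos hδ), eventually_gt_atTop 0,
    (tendsto_const_div_atTop_nhds_zero_nat (Q : ℝ)).eventually_lt_const hr]
    with n hTn hn hQ i hi m hm him hmi c
  have hn₀ : (0 : ℝ) < n := by exact_mod_cast hn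
  have hdist : |(m : ℝ) / n - i / n| < r := by
    rw [← sub_div, abs_div, abs_of_pos hn₀]
    refine lt_of_le_of_lt (div_le_div_of_nonneg_right ?_ hn₀.le) hQ
    have him' : (i : ℝ) ≤ m + Q := by exact_mod_cast him
    have hmi' : (m : ℝ) ≤ i + Q := by exact_mod_cast hmi
    exact abs_le.2 ⟨by linarith, by linarith⟩
  calc dist ((Tarr n m).toMap c) ((γ (i / n)).toMap c)
      ≤ dist ((Tarr n m).toMap c) ((γ (m / n)).toMap c) +
          dist ((γ (m / n)).toMap c) ((γ (i / n)).toMap c) := dist_triangle _ _ _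
    _ ≤ δ / 2 + δ / 2 := add_le_add ((dist_toMap_le_dC1 _ _ c).trans (hTn m hm))
        ((dist_toMap_le_dC1 _ _ c).trans
          (hγr _ (natCast_div_mem_Icc hm) _ (natCast_div_mem_Icc hi) hdist))
    _ = δ := add_halves δ

lemma arrIter_eq_mapIter (Tarr : ℕ → ℕ → CM lam Astar) (n k : ℕ) :
    arrIter Tarr n k = mapIter (Tarr n) k := by
  induction k with
  | zero => rfl
  | succ k ih => rw [arrIter, mapIter, ih]

end CurveAndArray

section RiemannSums

lemma abs_sum_le_card_mul_add_card_mul {ι : Type*} {s bad : Finset ι} {u : ι → ℝ}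
    {ε D : ℝ} (hε : 0 ≤ ε) (hD : 0 ≤ D) (hbad : ∀ j ∈ s, |u j| ≤ D)
    (hgood : ∀ j ∈ s, j ∉ bad → |u j| ≤ ε) : |∑ j ∈ s, u j| ≤ s.card * ε + bad.card * D := by
  classical
  calc |∑ j ∈ s, u j| ≤ ∑ j ∈ s, |u j| := Finset.abs_sum_le_sum_abs _ _
    _ ≤ ∑ j ∈ s, (ε + if j ∈ bad then D else 0) := Finset.sum_le_sum fun j hj => by
        split_ifs with hjb
        · linarith [hbad j hj]
        · simpa using hgood j hj hjb
    _ = s.card * ε + (s ∩ bad).card * D := by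
        simp [Finset.sum_add_distrib, Finset.sum_ite_mem]
    _ ≤ s.card * ε + bad.card * D := by
        gcongr
        exact Finset.inter_subset_right

variable {σ : ℝ → ℝ} {a b ε : ℝ}

lemma intervalIntegrable_of_continuousOn_Icc (hσ : ContinuousOn σ (Icc a b)) {p q : ℝ}
    (hp : p ∈ Icc a b) (hq : q ∈ Icc a b) : IntervalIntegrable σ volume p q :=
  (hσ.mono (uIcc_subset_Icc hp hq)).intervalIntegrable

lemma exists_abs_integral_sub_mul_le (hσ : ContinuousOn σ (Icc a b)) (hε : 0 < ε) :
    ∃ δ > 0, ∀ p ∈ Icc a b, ∀ q ∈ Icc a b, p ≤ q → q - p < δ →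
      |(∫ s in p..q, σ s) - (q - p) * σ p| ≤ ε * (q - p) := by
  obtain ⟨δ, hδ, hσδ⟩ := Metric.uniformContinuousOn_iff.1
    (isCompact_Icc.uniformContinuousOn_of_continuous hσ) ε hε
  refine ⟨δ, hδ, fun p hp q hq hpq hqp => ?_⟩
  have hconst : (∫ s in p..q, σ s) - (q - p) * σ p = ∫ s in p..q, (σ s - σ p) := by
    rw [intervalIntegral.integral_sub (intervalIntegrable_of_continuousOn_Icc hσ hp hq)
      intervalIntegrable_const, intervalIntegral.integral_const, smul_eq_mul]
  rw [hconst, ← abs_of_nonneg (sub_nonneg.2 hpq)]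
  refine intervalIntegral.norm_integral_le_of_norm_le_const (E := ℝ) fun s hs => ?_
  rw [uIoc_of_le hpq] at hs
  have hsp : dist s p < δ := by
    rw [Real.dist_eq, abs_of_pos (sub_pos.2 hs.1)]
    linarith [hs.2]
  exact (hσδ s ⟨hp.1.trans hs.1.le, hs.2.trans hq.2⟩ p hp hsp).le

lemma eventually_abs_riemannSum_sub_integral_le (hσ : ContinuousOn σ (Icc 0 1)) (hε : 0 < ε) :
    ∀ᶠ n : ℕ in atTop, ∀ i j : ℕ, i ≤ j → j ≤ n →
      |(n : ℝ)⁻¹ * ∑ k ∈ Finset.Ico i j, σ (k / n) - ∫ s in (i / n : ℝ)..(j / n : ℝ), σ s| ≤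
        ε * ((n : ℝ)⁻¹ * (j - i : ℕ)) := by
  obtain ⟨δ, hδ, hcell⟩ := exists_abs_integral_sub_mul_le hσ hε
  filter_upwards [tendsto_inv_atTop_nhds_zero_nat.eventually_lt_const hδ] with n hn i j hij hj
  have hmem {k : ℕ} (hk : k < j) : (k / n : ℝ) ∈ Icc (0 : ℝ) 1 ∧
      ((k + 1 : ℕ) / n : ℝ) ∈ Icc (0 : ℝ) 1 :=
    ⟨natCast_div_mem_Icc (by omega), natCast_div_mem_Icc (by omega)⟩
  have hstep (k : ℕ) : ((k + 1 : ℕ) / n : ℝ) - k / n = (n : ℝ)⁻¹ := by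
    push_cast
    ring
  rw [← intervalIntegral.sum_integral_adjacent_intervals_Ico (a := fun k : ℕ => (k / n : ℝ)) hij
    fun k hk => intervalIntegrable_of_continuousOn_Icc hσ (hmem hk.2).1 (hmem hk.2).2,
    Finset.mul_sum, ← Finset.sum_sub_distrib]
  refine (Finset.abs_sum_le_sum_abs _ _).trans ((Finset.sum_le_card_nsmul _ _ (ε * (n : ℝ)⁻¹)
    fun k hk => ?_).trans_eq ?_)
  · have hk' := hmem (Finset.mem_Ico.1 hk).2
    have hk_cell := hcell _ hk'.1 _ hk'.2
      (sub_nonneg.1 ((inv_nonneg.2 n.cast_nonneg).trans_eq (hstep k).symm))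
    rw [hstep] at hk_cell
    rw [abs_sub_comm]
    exact hk_cell hn
  · rw [Nat.card_Ico, nsmul_eq_mul]
    ring

lemma abs_integral_floor_div_sub_le (hσ : ContinuousOn σ (Icc 0 1)) {D : ℝ}
    (hD : ∀ s ∈ Icc (0 : ℝ) 1, |σ s| ≤ D) {n : ℕ} (hn : 0 < n) {s t : ℝ}
    (hs : s ∈ Icc (0 : ℝ) 1) (ht : t ∈ Icc (0 : ℝ) 1) :
    |(∫ u in (⌊n * s⌋₊ / n : ℝ)..(⌊n * t⌋₊ / n : ℝ), σ u) - ∫ u in s..t, σ u| ≤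
      2 * D * (n : ℝ)⁻¹ := by
  have hn₀ : (0 : ℝ) < n := by exact_mod_cast hn
  have hfloor {x : ℝ} (hx : x ∈ Icc (0 : ℝ) 1) : (⌊n * x⌋₊ / n : ℝ) ∈ Icc (0 : ℝ) 1 ∧
      (⌊n * x⌋₊ / n : ℝ) ≤ x ∧ x - ⌊n * x⌋₊ / n ≤ (n : ℝ)⁻¹ := by
    have hle : (⌊n * x⌋₊ / n : ℝ) ≤ x :=
      (div_le_iff₀' hn₀).2 (Nat.floor_le (mul_nonneg hn₀.le hx.1))
    refine ⟨⟨by positivity, hle.trans hx.2⟩, hle, ?_⟩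
    rw [sub_le_iff_le_add, inv_eq_one_div, ← add_div, le_div_iff₀' hn₀, add_comm]
    exact (Nat.lt_floor_add_one _).le
  have hend {x : ℝ} (hx : x ∈ Icc (0 : ℝ) 1) :
      |∫ u in (⌊n * x⌋₊ / n : ℝ)..x, σ u| ≤ D * (n : ℝ)⁻¹ := by
    obtain ⟨hmem, hle, hsub⟩ := hfloor hx
    refine (intervalIntegral.norm_integral_le_of_norm_le_const (E := ℝ) fun u hu => ?_).trans
      (mul_le_mul_of_nonneg_left ?_ ((abs_nonneg _).trans (hD x hx)))
    · rw [uIoc_of_le hle] at hu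
      exact hD u ⟨hmem.1.trans hu.1.le, hu.2.trans hx.2⟩
    · rwa [abs_of_nonneg (sub_nonneg.2 hle)]
  have hint {p q : ℝ} (hp : p ∈ Icc (0 : ℝ) 1) (hq : q ∈ Icc (0 : ℝ) 1) :=
    intervalIntegrable_of_continuousOn_Icc hσ hp hq
  rw [intervalIntegral.integral_interval_sub_interval_comm (hint (hfloor hs).1 (hfloor ht).1)
    (hint hs ht) (hint (hfloor hs).1 hs)]
  refine (abs_sub _ _).trans ((add_le_add (hend hs) (hend ht)).trans_eq ?_)
  ring

end RiemannSums

section FluctuationVariance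

open ProbabilityTheory

variable {lam Astar L θ : ℝ} {ρ f : Circle1 → ℝ} {K : NNReal} {Tarr : ℕ → ℕ → CM lam Astar}

lemma zetaP_eq_smul (Tarr : ℕ → ℕ → CM lam Astar) (f : Circle1 → ℝ) (n : ℕ) (t : ℝ) :
    (zetaP Tarr f n · t) = (n : ℝ)⁻¹ • (∑ k ∈ Finset.range ⌊n * t⌋₊, f ∘ mapIter (Tarr n) k +
      Int.fract (n * t) • f ∘ mapIter (Tarr n) ⌊n * t⌋₊) := by
  ext c
  simp [zetaP, fnk, arrIter_eq_mapIter]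

lemma zetaP_sub_eq_smul (Tarr : ℕ → ℕ → CM lam Astar) (f : Circle1 → ℝ) (n : ℕ) {s t : ℝ}
    (hst : s ≤ t) :
    (zetaP Tarr f n · t) - (zetaP Tarr f n · s) = (n : ℝ)⁻¹ •
      (∑ i ∈ Finset.range (⌊n * t⌋₊ - ⌊n * s⌋₊), f ∘ mapIter (Tarr n) (⌊n * s⌋₊ + i) +
        (Int.fract (n * t) • f ∘ mapIter (Tarr n) (⌊n * s⌋₊ + (⌊n * t⌋₊ - ⌊n * s⌋₊)) -
          Int.fract (n * s) • f ∘ mapIter (Tarr n) (⌊n * s⌋₊ + 0))) := by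
  have hle : ⌊n * s⌋₊ ≤ ⌊n * t⌋₊ := Nat.floor_mono (mul_le_mul_of_nonneg_left hst n.cast_nonneg)
  rw [zetaP_eq_smul, zetaP_eq_smul, ← smul_sub, Nat.add_sub_cancel' hle, add_zero,
    ← Finset.sum_Ico_eq_sum_range (fun k => f ∘ mapIter (Tarr n) k), Finset.sum_Ico_eq_sub _ hle]
  congr 1
  abel

lemma memLp_zetaP (hρ : Integrable ρ) (hρ₀ : 0 ≤ᵐ[volume] ρ) (hρ₁ : ∫ c, ρ c = 1)
    (hf : Continuous f) (n : ℕ) (t : ℝ) :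
    MemLp (zetaP Tarr f n · t) 2 (densityMeasure ρ) := by
  have hmem := memLp_comp_mapIter hρ hρ₀ hρ₁ hf (Tarr n)
  rw [zetaP_eq_smul]
  exact ((memLp_finsetSum' _ fun k _ => hmem k).add ((hmem _).const_smul _)).const_smul _

lemma integral_sq_xiD_sub (hρ : Integrable ρ) (hρ₀ : 0 ≤ᵐ[volume] ρ) (hρ₁ : ∫ c, ρ c = 1)
    (hf : Continuous f) (n : ℕ) (t s : ℝ) :
    ∫ c, (xiD Tarr f ρ n c t - xiD Tarr f ρ n c s) ^ 2 * ρ c =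
      n * Var[(zetaP Tarr f n · t) - (zetaP Tarr f n · s); densityMeasure ρ] := by
  have := isProbabilityMeasure_densityMeasure hρ hρ₀ hρ₁
  have hmem := memLp_zetaP (Tarr := Tarr) hρ hρ₀ hρ₁ hf n
  have hmean (u : ℝ) : zetaMean Tarr f ρ n u = ∫ c, zetaP Tarr f n c u ∂densityMeasure ρ :=
    (integral_densityMeasure hρ hρ₀ _).symm
  rw [variance_eq_integral ((hmem t).sub (hmem s)).aemeasurable,
    integral_densityMeasure hρ hρ₀, ← integral_const_mul]
  congr 1 with c
  simp only [Pi.sub_apply]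
  rw [integral_sub ((hmem t).integrable one_le_two) ((hmem s).integrable one_le_two), ← hmean,
    ← hmean]
  rw [xiD, xiD, ← mul_sub, ← mul_sub, ← mul_sub, mul_pow, Real.sq_sqrt n.cast_nonneg, mul_assoc,
    sub_sub_sub_comm]

theorem MemoryLoss.exists_abs_integral_sq_xiD_sub_le (h : MemoryLoss lam Astar L θ)
    (hf : LipschitzWith K f) :
    ∃ E, ∀ (Tarr : ℕ → ℕ → CM lam Astar) (ρ : Circle1 → ℝ), LogLipCone L ρ → ∫ c, ρ c = 1 →
      ∀ (n : ℕ) (s t : ℝ), s ≤ t →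
        |(∫ c, (xiD Tarr f ρ n c t - xiD Tarr f ρ n c s) ^ 2 * ρ c) - (n : ℝ)⁻¹ *
          ∑ i ∈ Finset.Ico ⌊n * s⌋₊ ⌊n * t⌋₊,
            greenKubo (fun k => orbitCov (Tarr n) ρ f i (i + k))| ≤ E * (n : ℝ)⁻¹ := by
  obtain ⟨B, hB⟩ := exists_forall_abs_le_of_continuous hf.continuous
  set C := 2 * B * (2 * B + K)
  refine ⟨2 * (C / (1 - θ)) / (1 - θ) + 4 * (C / (1 - θ)) + 4 * C,
    fun Tarr ρ hρ hρ₁ n s t hst => ?_⟩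
  have := isProbabilityMeasure_densityMeasure hρ.integrable hρ.ae_nonneg hρ₁
  have hcov (i k : ℕ) : cov[f ∘ mapIter (Tarr n) (⌊n * s⌋₊ + i),
      f ∘ mapIter (Tarr n) (⌊n * s⌋₊ + (i + k)); densityMeasure ρ] =
        orbitCov (Tarr n) ρ f (⌊n * s⌋₊ + i) (⌊n * s⌋₊ + i + k) := by
    rw [covariance_comp_mapIter hρ.integrable hρ.ae_nonneg hρ₁ hf.continuous, add_assoc]
  have hvar := abs_variance_sum_add_sub_sum_greenKubo_le
    (X := fun i => f ∘ mapIter (Tarr n) (⌊n * s⌋₊ + i))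
    (fun i => memLp_comp_mapIter hρ.integrable hρ.ae_nonneg hρ₁ hf.continuous (Tarr n) _)
    h.theta_nonneg h.theta_lt_one
    (fun i k => by
      rw [hcov]
      exact h.abs_orbitCov_le hρ hρ₁ hf hB (Tarr n) _ k)
    (abs_of_nonneg (Int.fract_nonneg (n * s)) ▸ (Int.fract_lt_one _).le)
    (abs_of_nonneg (Int.fract_nonneg (n * t)) ▸ (Int.fract_lt_one _).le) (⌊n * t⌋₊ - ⌊n * s⌋₊)
  simp only [hcov] at hvar
  have hscale : (n : ℝ) * ((n : ℝ)⁻¹) ^ 2 = (n : ℝ)⁻¹ := by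
    simpa [sq, mul_assoc] using inv_mul_mul_self (n : ℝ)⁻¹
  rw [integral_sq_xiD_sub hρ.integrable hρ.ae_nonneg hρ₁ hf.continuous, zetaP_sub_eq_smul _ _ _ hst,
    variance_smul, ← mul_assoc, hscale, Finset.sum_Ico_eq_sum_range, ← mul_sub, abs_mul,
    abs_of_nonneg (inv_nonneg.2 n.cast_nonneg), mul_comm _ (n : ℝ)⁻¹]
  exact mul_le_mul_of_nonneg_left hvar (inv_nonneg.2 n.cast_nonneg)

end FluctuationVariance

section Asymptotics

variable {lam Astar L θ η : ℝ} {f : Circle1 → ℝ} {K : NNReal} {γ : ℝ → CM lam Astar}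
  {Tarr : ℕ → ℕ → CM lam Astar} {ρhat : ℝ → Circle1 → ℝ}

namespace MemoryLoss

theorem exists_integral_sq_xiD_sub_le (h : MemoryLoss lam Astar L θ) (hf : LipschitzWith K f) :
    ∃ B, ∀ (Tarr : ℕ → ℕ → CM lam Astar) (ρ : Circle1 → ℝ), LogLipCone L ρ → ∫ c, ρ c = 1 →
      ∀ n : ℕ, ∀ t ∈ Icc (0 : ℝ) 1, ∀ s ∈ Icc (0 : ℝ) 1,
        ∫ c, (xiD Tarr f ρ n c t - xiD Tarr f ρ n c s) ^ 2 * ρ c ≤ B := by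
  obtain ⟨E, hE⟩ := h.exists_abs_integral_sq_xiD_sub_le hf
  obtain ⟨B, hB⟩ := exists_forall_abs_le_of_continuous hf.continuous
  set G := 3 * (2 * B * (2 * B + K) / (1 - θ))
  refine ⟨G + |E|, fun Tarr ρ hρ hρ₁ n t ht s hs => ?_⟩
  wlog hst : s ≤ t generalizing s t
  · simpa only [sub_sq_comm] using this s hs t ht (le_of_not_ge hst)
  have hG (i : ℕ) : greenKubo (fun k => orbitCov (Tarr n) ρ f i (i + k)) ≤ G :=
    (le_abs_self _).trans (abs_greenKubo_le h.theta_nonneg h.theta_lt_one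
      (h.abs_orbitCov_le hρ hρ₁ hf hB (Tarr n) i))
  have hG₀ : 0 ≤ G := (abs_nonneg _).trans (abs_greenKubo_le h.theta_nonneg h.theta_lt_one
    (h.abs_orbitCov_le hρ hρ₁ hf hB (Tarr n) 0))
  have hcard : ((⌊n * t⌋₊ - ⌊n * s⌋₊ : ℕ) : ℝ) ≤ n := by
    exact_mod_cast (Nat.sub_le _ _).trans
      (Nat.floor_le_of_le (mul_le_of_le_one_right n.cast_nonneg ht.2))
  have hsum : (n : ℝ)⁻¹ * ∑ i ∈ Finset.Ico ⌊n * s⌋₊ ⌊n * t⌋₊,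
      greenKubo (fun k => orbitCov (Tarr n) ρ f i (i + k)) ≤ G := by
    calc _ ≤ (n : ℝ)⁻¹ * (n * G) := by
          refine mul_le_mul_of_nonneg_left ?_ (inv_nonneg.2 n.cast_nonneg)
          refine (Finset.sum_le_card_nsmul _ _ G fun i _ => hG i).trans ?_
          rw [Nat.card_Ico, nsmul_eq_mul]
          exact mul_le_mul_of_nonneg_right hcard hG₀
      _ ≤ G := by
          rw [← mul_assoc]
          exact mul_le_of_le_one_left hG₀ inv_mul_le_one
  have herr : E * (n : ℝ)⁻¹ ≤ |E| :=
    (mul_le_mul_of_nonneg_right (le_abs_self E) (inv_nonneg.2 n.cast_nonneg)).trans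
      (mul_le_of_le_one_right (abs_nonneg E) n.cast_inv_le_one)
  linarith [(abs_le.1 (hE Tarr ρ hρ hρ₁ n s t hst)).2]

theorem continuousOn_asymptoticVariance (h : MemoryLoss lam Astar L θ) (hf : LipschitzWith K f)
    (hη : 0 < η) (hγ : HolderCurve η γ) (hρhat : ∀ t ∈ Icc (0 : ℝ) 1, IsSRBDensity (γ t) (ρhat t)) :
    ContinuousOn (fun t => asymptoticVariance (γ t) (ρhat t) f) (Icc 0 1) := by
  refine Metric.continuousOn_iff.2 fun s hs ε hε => ?_
  obtain ⟨Λ, hΛ⟩ := hγ.exists_lipschitzWith hη.le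
  obtain ⟨Q, δ, hδ, hclose⟩ := h.exists_abs_greenKubo_orbitCov_sub_le hf Λ (half_pos (half_pos hε))
  obtain ⟨r, hr, hγr⟩ := hγ.exists_forall_dC1_le hη hδ
  have hone : LogLipCone L (fun _ : Circle1 => (1 : ℝ)) := .const h.L_nonneg zero_le_one
  have hnear {t : ℝ} (ht : t ∈ Icc (0 : ℝ) 1) (hst : |s - t| < r) :=
    hclose (fun _ => γ s) (γ t) (fun _ => 1) (ρhat t) hone (by simp) (hρhat t ht) (hΛ t ht) Q le_rfl
      fun _ _ _ c => (dist_toMap_le_dC1 _ _ c).trans (hγr s hs t ht hst)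
  refine ⟨r, hr, fun t ht hts => ?_⟩
  have ht_near := hnear ht (by rwa [← Real.dist_eq, dist_comm])
  have hs_near := hnear hs (by simpa using hr)
  rw [abs_sub_comm] at ht_near
  calc dist (asymptoticVariance (γ t) (ρhat t) f) (asymptoticVariance (γ s) (ρhat s) f)
      ≤ ε / 2 / 2 + ε / 2 / 2 := (abs_sub_le _ _ _).trans (add_le_add ht_near hs_near)
    _ < ε := by linarith

theorem exists_eventually_abs_greenKubo_sub_asymptoticVariance_le (h : MemoryLoss lam Astar L θ)
    (hf : LipschitzWith K f) (hη : 0 < η) (hγ : HolderCurve η γ) (hT : ArrayApprox η γ Tarr)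
    (hρhat : ∀ t ∈ Icc (0 : ℝ) 1, IsSRBDensity (γ t) (ρhat t)) {ε : ℝ} (hε : 0 < ε) :
    ∃ Q : ℕ, ∀ᶠ n : ℕ in atTop, ∀ ρ : Circle1 → ℝ, LogLipCone L ρ → ∫ c, ρ c = 1 →
      ∀ i, Q ≤ i → i + Q ≤ n →
        |greenKubo (fun k => orbitCov (Tarr n) ρ f i (i + k)) -
          asymptoticVariance (γ (i / n)) (ρhat (i / n)) f| ≤ ε := by
  obtain ⟨Λ, hΛ⟩ := hγ.exists_lipschitzWith hη.le
  obtain ⟨Q, δ, hδ, hclose⟩ := h.exists_abs_greenKubo_orbitCov_sub_le hf Λ hε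
  refine ⟨Q, ?_⟩
  filter_upwards [hT.eventually_dist_le hη hγ hδ Q] with n hn ρ hρ hρ₁ i hi hin
  have hmem : (i / n : ℝ) ∈ Icc (0 : ℝ) 1 := natCast_div_mem_Icc (by omega)
  exact hclose (Tarr n) _ ρ _ hρ hρ₁ (hρhat _ hmem) (hΛ _ hmem) i hi
    fun m him hmi => hn i (by omega) m (by omega) him hmi

theorem exists_eventually_abs_sum_greenKubo_sub_le (h : MemoryLoss lam Astar L θ)
    (hf : LipschitzWith K f) (hη : 0 < η) (hγ : HolderCurve η γ) (hT : ArrayApprox η γ Tarr)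
    (hρhat : ∀ t ∈ Icc (0 : ℝ) 1, IsSRBDensity (γ t) (ρhat t)) {ε : ℝ} (hε : 0 < ε) :
    ∃ D, ∀ᶠ n : ℕ in atTop, ∀ ρ : Circle1 → ℝ, LogLipCone L ρ → ∫ c, ρ c = 1 →
      ∀ i j, j ≤ n → |∑ k ∈ Finset.Ico i j, (greenKubo (fun l => orbitCov (Tarr n) ρ f k (k + l)) -
          asymptoticVariance (γ (k / n)) (ρhat (k / n)) f)| ≤ (j - i : ℕ) * ε + D := by
  obtain ⟨B, hB⟩ := exists_forall_abs_le_of_continuous hf.continuous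
  obtain ⟨Q, hQ⟩ := h.exists_eventually_abs_greenKubo_sub_asymptoticVariance_le hf hη hγ hT hρhat hε
  set G := 3 * (2 * B * (2 * B + K) / (1 - θ))
  refine ⟨(2 * Q : ℕ) * (G + G), ?_⟩
  filter_upwards [hQ] with n hn ρ hρ hρ₁ i j hj
  have hbad (k : ℕ) (hk : k ≤ n) : |greenKubo (fun l => orbitCov (Tarr n) ρ f k (k + l)) -
      asymptoticVariance (γ (k / n)) (ρhat (k / n)) f| ≤ G + G :=
    (abs_sub _ _).trans (add_le_add
      (abs_greenKubo_le h.theta_nonneg h.theta_lt_one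
        (h.abs_orbitCov_le hρ hρ₁ hf hB (Tarr n) k))
      (abs_greenKubo_le h.theta_nonneg h.theta_lt_one
        (h.abs_orbitCov_srb_le (hρhat _ (natCast_div_mem_Icc hk)) hf hB)))
  refine (abs_sum_le_card_mul_add_card_mul (bad := Finset.range Q ∪ Finset.Ico (n - Q) n) hε.le
    ((abs_nonneg _).trans (hbad 0 n.zero_le)) (fun k hk => hbad k ?_)
    fun k hk hk_mid => hn ρ hρ hρ₁ k ?_ ?_).trans ?_
  · exact (Finset.mem_Ico.1 hk).2.le.trans hj
  · by_contra hkQ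
    exact hk_mid (Finset.mem_union_left _ (Finset.mem_range.2 (not_le.1 hkQ)))
  · by_contra hkQ
    exact hk_mid (Finset.mem_union_right _ (Finset.mem_Ico.2
      ⟨by omega, (Finset.mem_Ico.1 hk).2.trans_le hj⟩))
  · rw [Nat.card_Ico]
    gcongr
    · exact (abs_nonneg _).trans (hbad 0 n.zero_le)
    · refine (Finset.card_union_le _ _).trans ?_
      rw [Finset.card_range, Nat.card_Ico]
      omega

theorem exists_eventually_abs_integral_sq_xiD_sub_sub_integral_le (h : MemoryLoss lam Astar L θ)
    (hf : LipschitzWith K f) (hη : 0 < η) (hγ : HolderCurve η γ) (hT : ArrayApprox η γ Tarr)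
    (hρhat : ∀ t ∈ Icc (0 : ℝ) 1, IsSRBDensity (γ t) (ρhat t)) {ε : ℝ} (hε : 0 < ε) :
    ∃ D, ∀ᶠ n : ℕ in atTop, ∀ ρ : Circle1 → ℝ, LogLipCone L ρ → ∫ c, ρ c = 1 →
      ∀ s ∈ Icc (0 : ℝ) 1, ∀ t ∈ Icc (0 : ℝ) 1, s ≤ t →
        |(∫ c, (xiD Tarr f ρ n c t - xiD Tarr f ρ n c s) ^ 2 * ρ c) -
          ∫ u in s..t, asymptoticVariance (γ u) (ρhat u) f| ≤ ε * (t - s) + D * (n : ℝ)⁻¹ := by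
  have hσ := h.continuousOn_asymptoticVariance hf hη hγ hρhat
  set σ := fun t => asymptoticVariance (γ t) (ρhat t) f
  obtain ⟨E, hE⟩ := h.exists_abs_integral_sq_xiD_sub_le hf
  obtain ⟨D₁, hD₁⟩ :=
    h.exists_eventually_abs_sum_greenKubo_sub_le hf hη hγ hT hρhat (half_pos hε)
  obtain ⟨D₂, hD₂⟩ := isCompact_Icc.exists_bound_of_continuousOn hσ
  refine ⟨E + D₁ + ε + 2 * D₂, ?_⟩
  filter_upwards [hD₁, eventually_abs_riemannSum_sub_integral_le hσ (half_pos hε),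
    eventually_gt_atTop 0] with n hn_sum hn_riemann hn ρ hρ hρ₁ s hs t ht hst
  have hn₀ : (0 : ℝ) < n := by exact_mod_cast hn
  have hle : ⌊n * s⌋₊ ≤ ⌊n * t⌋₊ := Nat.floor_mono (mul_le_mul_of_nonneg_left hst hn₀.le)
  have htn : ⌊n * t⌋₊ ≤ n := Nat.floor_le_of_le (mul_le_of_le_one_right hn₀.le ht.2)
  have hcount : (n : ℝ)⁻¹ * (⌊n * t⌋₊ - ⌊n * s⌋₊ : ℕ) ≤ (t - s) + (n : ℝ)⁻¹ := by
    rw [inv_mul_le_iff₀ hn₀, mul_add, mul_inv_cancel₀ hn₀.ne', Nat.cast_sub hle]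
    linarith [Nat.floor_le (mul_nonneg hn₀.le ht.1), Nat.lt_floor_add_one ((n : ℝ) * s)]
  have hvar := hE Tarr ρ hρ hρ₁ n s t hst
  have hlocal := mul_le_mul_of_nonneg_left (hn_sum ρ hρ hρ₁ ⌊n * s⌋₊ _ htn) (inv_nonneg.2 hn₀.le)
  rw [← abs_of_pos (inv_pos.2 hn₀), ← abs_mul, abs_of_pos (inv_pos.2 hn₀), Finset.sum_sub_distrib,
    mul_sub] at hlocal
  have hriemann := hn_riemann _ _ hle htn
  have hend := abs_integral_floor_div_sub_le hσ hD₂ hn hs ht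
  have hcount_ε := mul_le_mul_of_nonneg_left hcount hε.le
  rw [abs_le] at hvar hlocal hriemann hend ⊢
  constructor <;> linarith

theorem eventually_abs_integral_sq_xiD_sub_sub_integral_le (h : MemoryLoss lam Astar L θ)
    (hf : LipschitzWith K f) (hη : 0 < η) (hγ : HolderCurve η γ) (hT : ArrayApprox η γ Tarr)
    (hρhat : ∀ t ∈ Icc (0 : ℝ) 1, IsSRBDensity (γ t) (ρhat t)) {ε : ℝ} (hε : 0 < ε) :
    ∀ᶠ n : ℕ in atTop, ∀ ρ : Circle1 → ℝ, LogLipCone L ρ → ∫ c, ρ c = 1 →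
      ∀ s ∈ Icc (0 : ℝ) 1, ∀ t ∈ Icc (0 : ℝ) 1, s ≤ t →
        |(∫ c, (xiD Tarr f ρ n c t - xiD Tarr f ρ n c s) ^ 2 * ρ c) -
          ∫ u in s..t, asymptoticVariance (γ u) (ρhat u) f| ≤ ε * ((√n)⁻¹ + (t - s)) := by
  obtain ⟨D, hD⟩ :=
    h.exists_eventually_abs_integral_sq_xiD_sub_sub_integral_le hf hη hγ hT hρhat hε
  have hlim : Tendsto (fun n : ℕ => D * (√n)⁻¹) atTop (𝓝 0) := by
    simpa using ((Real.tendsto_sqrt_atTop.comp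
      tendsto_natCast_atTop_atTop).inv_tendsto_atTop).const_mul D
  filter_upwards [hD, hlim.eventually_le_const hε] with n hn hDn ρ hρ hρ₁ s hs t ht hst
  have hinv : D * (n : ℝ)⁻¹ ≤ ε * (√n)⁻¹ := by
    rw [← Real.mul_self_sqrt n.cast_nonneg, mul_inv, ← mul_assoc]
    simpa using mul_le_mul_of_nonneg_right hDn (inv_nonneg.2 (Real.sqrt_nonneg n))
  linarith [hn ρ hρ hρ₁ s hs t ht hst]

end MemoryLoss

end Asymptotics

/-- Lemma `lem:variance`.  For `ρ ∈ 𝒟_L`: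
(1) the second moments `μ[(ξₙ(t) − ξₙ(s))²]` are bounded uniformly over `t, s ∈ [0,1]` and
`n ≥ 1`, with a bound depending on `ρ` only through `L`;
(2) `μ[(ξₙ(t+h) − ξₙ(t))²] = ∫ₜ^{t+h} σ̂ₛ²(f) ds + o(n^{−1/2}) + h·o(1)` uniformly;
(3) `∫ₜ^{t+h} σ̂ₛ²(f) ds = h·σ̂ₜ²(f) + o(h)` as `h → 0`, uniformly in `t`. -/
theorem statement12 {lam Astar : ℝ} (hlam : 1 < lam) (hA : 0 < Astar)
    {η : ℝ} (hη : η ∈ Set.Ioo (0 : ℝ) 1)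
    (γ : ℝ → CM lam Astar) (hγ : HolderCurve η γ)
    (Tarr : ℕ → ℕ → CM lam Astar) (hT : ArrayApprox η γ Tarr)
    (f : Circle1 → ℝ) (hf : ∃ K : NNReal, LipschitzWith K f)
    (ρhat : ℝ → Circle1 → ℝ) (hρhat : ∀ t ∈ Set.Icc (0 : ℝ) 1, IsSRBDensity (γ t) (ρhat t))
    (σ2 : ℝ → ℝ)
    (hσ2 : ∀ t ∈ Set.Icc (0 : ℝ) 1,
      Tendsto (fun m : ℕ => ∫ x : Circle1,
          ((m : ℝ)⁻¹ * (∑ k ∈ Finset.range m,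
            (f ((γ t).toMap^[k] x) - ∫ y : Circle1, f y * ρhat t y)) ^ 2) * ρhat t x)
        atTop (𝓝 (σ2 t)))
    (L : ℝ) (hL : 0 < L) :
    (∃ B : ℝ, ∀ ρ : Circle1 → ℝ, memD L ρ → ∀ n : ℕ, 1 ≤ n →
      ∀ t ∈ Set.Icc (0 : ℝ) 1, ∀ s ∈ Set.Icc (0 : ℝ) 1,
        (∫ x : Circle1, (xiD Tarr f ρ n x t - xiD Tarr f ρ n x s) ^ 2 * ρ x) ≤ B) ∧
    (∀ ε : ℝ, 0 < ε → ∃ N : ℕ, ∀ ρ : Circle1 → ℝ, memD L ρ → ∀ n : ℕ, N ≤ n → 1 ≤ n →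
      ∀ t h : ℝ, 0 ≤ t → 0 ≤ h → t + h ≤ 1 →
        |(∫ x : Circle1, (xiD Tarr f ρ n x (t + h) - xiD Tarr f ρ n x t) ^ 2 * ρ x) -
            ∫ s in t..(t + h), σ2 s| ≤ ε * ((Real.sqrt n)⁻¹ + h)) ∧
    (∀ ε : ℝ, 0 < ε → ∃ δ : ℝ, 0 < δ ∧ ∀ t h : ℝ, 0 ≤ t → 0 < h → h ≤ δ → t + h ≤ 1 →
      |(∫ s in t..(t + h), σ2 s) - h * σ2 t| ≤ ε * h) := by
  obtain ⟨K, hK⟩ := hf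
  obtain ⟨L', θ, hLL', h⟩ := exists_memoryLoss hlam Astar hL.le
  have hcone {ρ : Circle1 → ℝ} (hρ : memD L ρ) : LogLipCone L' ρ := hρ.logLipCone.mono hLL'
  have hσ : EqOn σ2 (fun t => asymptoticVariance (γ t) (ρhat t) f) (Icc 0 1) := fun t ht =>
    tendsto_nhds_unique (hσ2 t ht) (h.tendsto_integral_sq_birkhoffSum (hρhat t ht) hK)
  have hσ_cont : ContinuousOn σ2 (Icc 0 1) :=
    (h.continuousOn_asymptoticVariance hK hη.1 hγ hρhat).congr hσ
  refine ⟨?_, fun ε hε => ?_, fun ε hε => ?_⟩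
  · obtain ⟨B, hB⟩ := h.exists_integral_sq_xiD_sub_le hK
    exact ⟨B, fun ρ hρ n _ => hB Tarr ρ (hcone hρ) hρ.1.2.1 n⟩
  · obtain ⟨N, hN⟩ := eventually_atTop.1
      (h.eventually_abs_integral_sq_xiD_sub_sub_integral_le hK hη.1 hγ hT hρhat hε)
    refine ⟨N, fun ρ hρ n hn _ t l ht hl htl => ?_⟩
    have htl_mem : t + l ∈ Icc (0 : ℝ) 1 := ⟨add_nonneg ht hl, htl⟩
    have ht_mem : t ∈ Icc (0 : ℝ) 1 := ⟨ht, by linarith⟩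
    rw [intervalIntegral.integral_congr (hσ.mono (uIcc_subset_Icc ht_mem htl_mem))]
    simpa using hN n hn ρ (hcone hρ) hρ.1.2.1 t ht_mem (t + l) htl_mem (by linarith)
  · obtain ⟨δ, hδ, hσδ⟩ := exists_abs_integral_sub_mul_le hσ_cont hε
    refine ⟨δ / 2, half_pos hδ, fun t l ht hl hlδ htl => ?_⟩
    simpa using hσδ t ⟨ht, by linarith⟩ (t + l) ⟨by linarith, htl⟩ (by linarith) (by linarith)
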